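/- arXiv:1805.09564 — 6 statements merged into one kernel-verified Lean document; each statement's English description precedes it below -/
import Mathlib

section
/- Fix β > 0, energies E ∈ ℝ^d, and Gibbs weights g_i = e^{-βE_i}. For probability vectors p, p' ∈ ℝ^d, the following are equivalent: (1) there exists a d × d stochastic matrix Λ with Λ g = g and Λ p = p' (a Gibbs-stochastic map taking p to p'); (2) p thermo-majorizes p', i.e. for every t ≥ 0, ∑_{i=1}^d max(p_i − t g_i, 0) ≥ ∑_{i=1}^d max(p'_i − t g_i, 0). -/
open scoped BigOperators Topology
open Filter

/-- A probability vector: nonnegative entries summing to 1. -/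
def IsProbVec {ι : Type*} [Fintype ι] (p : ι → ℝ) : Prop :=
  (∀ i, 0 ≤ p i) ∧ ∑ i, p i = 1

/-- The sum of the `k` largest entries of `p`, as the supremum of sums over subsets of size `k`. -/
noncomputable def topSum {ι : Type*} [Fintype ι] (p : ι → ℝ) (k : ℕ) : ℝ :=
  sSup {x : ℝ | ∃ s : Finset ι, s.card = k ∧ x = ∑ i ∈ s, p i}

/-- `p` majorizes `p'`: for every `1 ≤ k ≤ d`, the sum of the `k` largest entries of `p`
is at least that of `p'`. -/
def Majorizes {ι : Type*} [Fintype ι] (p p' : ι → ℝ) : Prop :=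
  ∀ k : ℕ, 1 ≤ k → k ≤ Fintype.card ι → topSum p' k ≤ topSum p k

/-- A column-stochastic matrix: nonnegative entries, each column sums to 1. -/
def ColStochastic {ι κ : Type*} [Fintype ι] [Fintype κ] (Λ : Matrix ι κ ℝ) : Prop :=
  (∀ i j, 0 ≤ Λ i j) ∧ ∀ j, ∑ i, Λ i j = 1

/-- A bistochastic (doubly stochastic) matrix. -/
def Bistochastic {ι : Type*} [Fintype ι] (A : Matrix ι ι ℝ) : Prop :=
  (∀ i j, 0 ≤ A i j) ∧ (∀ i, ∑ j, A i j = 1) ∧ (∀ j, ∑ i, A i j = 1)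

/-- Real power with the convention `0 ^ a = 0` (in particular `0 ^ 0 = 0`). -/
noncomputable def rpow0 (x a : ℝ) : ℝ := if x = 0 then 0 else x ^ a

/-- The classical Rényi divergence `D_α(p‖q)`, with the conventions `0^0 = 0`, `0·ln 0 = 0`;
for `α < 0` the prefactor is `1/(1-α)`, for `α ∈ [0,1)∪(1,∞)` it is `1/(α-1)`,
and `D_1` is the Kullback–Leibler divergence. -/
noncomputable def renyiD {ι : Type*} [Fintype ι] (α : ℝ) (p q : ι → ℝ) : ℝ :=
  if α = 1 then ∑ i, p i * Real.log (p i / q i)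
  else if α < 0 then (1 / (1 - α)) * Real.log (∑ i, rpow0 (p i) α * rpow0 (q i) (1 - α))
  else (1 / (α - 1)) * Real.log (∑ i, rpow0 (p i) α * rpow0 (q i) (1 - α))

/-- The Rényi entropy `H_α(p) = (sgn α / (1-α)) ln ∑ p_i^α`, with `H_1` the Shannon entropy. -/
noncomputable def renyiH {ι : Type*} [Fintype ι] (α : ℝ) (p : ι → ℝ) : ℝ :=
  if α = 1 then -∑ i, p i * Real.log (p i)
  else ((if 0 ≤ α then (1 : ℝ) else -1) / (1 - α)) * Real.log (∑ i, rpow0 (p i) α)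

/-- Trace (total variation) distance between probability vectors. -/
noncomputable def traceDist {ι : Type*} [Fintype ι] (p p' : ι → ℝ) : ℝ :=
  (1 / 2) * ∑ i, |p i - p' i|

/-- Tensor product of two vectors: `(p ⊗ r)_{(i,j)} = p_i r_j`. -/
def tensorVec {ι κ : Type*} (p : ι → ℝ) (r : κ → ℝ) : ι × κ → ℝ :=
  fun x => p x.1 * r x.2

/-- Interpolation of a function with subgradients by elements of a cone of functions that
contains affine functions and hinges. -/
lemma aux_interp (C : (ℝ → ℝ) → Prop)
    (haff : ∀ a b : ℝ, C (fun x => a + b * x))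
    (hadd : ∀ φ, C φ → ∀ c t : ℝ, 0 ≤ c → C (fun x => φ x + c * max (x - t) 0))
    (f : ℝ → ℝ) (hsub : ∀ m, ∃ s, ∀ x, f m + s * (x - m) ≤ f x) (X : Finset ℝ) :
    X = ∅ ∨ ∃ m ∈ X, (∀ x ∈ X, x ≤ m) ∧ ∃ φ s, C φ ∧ (∀ x ∈ X, φ x = f x) ∧
      (∀ x, m ≤ x → φ x = f m + s * (x - m)) ∧ (∀ x, m ≤ x → f m + s * (x - m) ≤ f x) := by
  induction X using Finset.induction_on_max with
  | empty => left; rfl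
  | insert a S ha ih =>
    right
    refine ⟨a, Finset.mem_insert_self _ _, ?_, ?_⟩
    · intro x hx
      rcases Finset.mem_insert.1 hx with rfl | hx
      · exact le_rfl
      · exact (ha x hx).le
    rcases ih with rfl | ⟨m, hm, hmax, φ, s, hC, hφ, hlin, hle⟩
    · obtain ⟨s, hs⟩ := hsub a
      refine ⟨fun x => (f a - s * a) + s * x, s, haff _ _, ?_, ?_, fun x _ => hs x⟩
      · intro x hx
        simp at hx
        subst hx
        ring
      · intro x _
        ring
    · have hma : 0 < a - m := by linarith [ha m hm]
      have hc : 0 ≤ (f a - φ a) / (a - m) := by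
        apply div_nonneg _ hma.le
        have h1 := hlin a (by linarith)
        have h2 := hle a (by linarith)
        linarith
      set c := (f a - φ a) / (a - m) with hcdef
      have hca : c * (a - m) = f a - φ a := by
        rw [hcdef]; field_simp
      have h1 := hlin a (by linarith)
      refine ⟨fun x => φ x + c * max (x - m) 0, s + c, hadd φ hC c m hc, ?_, ?_, ?_⟩
      · intro x hx
        rcases Finset.mem_insert.1 hx with rfl | hx
        · simp only [max_eq_left hma.le]
          linarith
        · have : max (x - m) 0 = 0 := max_eq_right (by linarith [hmax x hx])
          simp only [this]
          rw [hφ x hx]; ring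
      · intro x hx
        have h2 := hlin x (by linarith)
        have h3 : max (x - m) 0 = x - m := max_eq_left (by linarith)
        simp only [h3]
        rw [h2]
        linear_combination hca - h1
      · intro x hx
        obtain ⟨r, hr⟩ := hsub a
        have h4 := hr m
        have h5 : s + c ≤ r := by
          have : (s + c) * (a - m) ≤ r * (a - m) := by nlinarith
          exact le_of_mul_le_mul_right this hma
        have h6 := hr x
        have h7 : (s + c) * (x - a) ≤ r * (x - a) :=
          mul_le_mul_of_nonneg_right h5 (by linarith)
        linarith

lemma aux_convex {d : ℕ} (g p p' : Fin d → ℝ) (hg : ∀ i, 0 < g i)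
    (hsum : ∑ i, p i = ∑ i, p' i) (hp : ∀ i, 0 ≤ p i) (hp' : ∀ i, 0 ≤ p' i)
    (H : ∀ t : ℝ, 0 ≤ t →
        ∑ i, max (p' i - t * g i) 0 ≤ ∑ i, max (p i - t * g i) 0)
    (f : ℝ → ℝ) (hsub : ∀ m, ∃ s, ∀ x, f m + s * (x - m) ≤ f x) :
    ∑ i, g i * f (p' i / g i) ≤ ∑ i, g i * f (p i / g i) := by
  have key : ∀ t : ℝ, ∑ i, max (p' i - t * g i) 0 ≤ ∑ i, max (p i - t * g i) 0 := by
    intro t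
    rcases le_total 0 t with ht | ht
    · exact H t ht
    · have h1 : ∀ q : Fin d → ℝ, (∀ i, 0 ≤ q i) →
          ∑ i, max (q i - t * g i) 0 = ∑ i, q i - ∑ i, t * g i := by
        intro q hq
        rw [← Finset.sum_sub_distrib]
        refine Finset.sum_congr rfl fun i _ => max_eq_left ?_
        nlinarith [hq i, hg i]
      rw [h1 p hp, h1 p' hp', hsum]
  have hin := aux_interp
    (fun φ => ∑ i, g i * φ (p' i / g i) ≤ ∑ i, g i * φ (p i / g i)) ?_ ?_ f hsub
    (Finset.univ.image (fun i => p i / g i) ∪ Finset.univ.image (fun i => p' i / g i))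
  · rcases hin with h0 | ⟨m, _, _, φ, s, hC, hφ, _⟩
    · have : IsEmpty (Fin d) := by
        constructor
        intro i
        have : p i / g i ∈ (∅ : Finset ℝ) := by
          rw [← h0]; simp
        simp at this
      simp
    · have e1 : ∀ i, φ (p i / g i) = f (p i / g i) := fun i => hφ _ (by simp)
      have e2 : ∀ i, φ (p' i / g i) = f (p' i / g i) := fun i => hφ _ (by simp)
      simpa only [e1, e2] using hC
  · intro a b
    have h1 : ∀ q : Fin d → ℝ, ∑ i, g i * (a + b * (q i / g i)) =
        ∑ i, g i * a + b * ∑ i, q i := by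
      intro q
      rw [Finset.mul_sum, ← Finset.sum_add_distrib]
      refine Finset.sum_congr rfl fun i _ => ?_
      have := (hg i).ne'
      field_simp
    simp only [h1, hsum, le_refl]
  · intro φ hφ c t hc
    have h1 : ∀ q : Fin d → ℝ, ∑ i, g i * (φ (q i / g i) + c * max (q i / g i - t) 0) =
        ∑ i, g i * φ (q i / g i) + c * ∑ i, max (q i - t * g i) 0 := by
      intro q
      rw [Finset.mul_sum, ← Finset.sum_add_distrib]
      refine Finset.sum_congr rfl fun i _ => ?_
      have h2 : g i * max (q i / g i - t) 0 = max (q i - t * g i) 0 := by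
        rw [mul_max_of_nonneg _ _ (hg i).le]
        have := (hg i).ne'
        congr 1
        · field_simp
        · simp
      rw [← h2]; ring
    simp only [h1]
    exact add_le_add hφ (mul_le_mul_of_nonneg_left (key t) hc)

lemma aux_sep {d : ℕ} (g p p' : Fin d → ℝ)
    (H : ∀ y v : Fin d → ℝ, ∃ c : Fin d → Fin d,
      ∑ i, (y i * p' i + v i * g i) ≤ ∑ j, (y (c j) * p j + v (c j) * g j)) :
    ∃ Λ : Matrix (Fin d) (Fin d) ℝ,
        ColStochastic Λ ∧ Λ.mulVec g = g ∧ Λ.mulVec p = p' := by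
  let L : (Fin d → Fin d → ℝ) →ₗ[ℝ] (Fin d → ℝ) × (Fin d → ℝ) :=
    (∑ j, p j • LinearMap.proj j).prod (∑ j, g j • LinearMap.proj j)
  have hL : ∀ M, L M = (∑ j, p j • M j, ∑ j, g j • M j) := by
    intro M
    simp [L, LinearMap.sum_apply]
  let S : Set (Fin d → Fin d → ℝ) := Set.univ.pi fun _ => stdSimplex ℝ (Fin d)
  have hSc : IsCompact S := isCompact_univ_pi fun _ => isCompact_stdSimplex ℝ (Fin d)
  have hSv : Convex ℝ S := convex_pi fun _ _ => convex_stdSimplex ℝ (Fin d)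
  have hK : IsCompact (L '' S) := hSc.image L.continuous_of_finiteDimensional
  have hKv : Convex ℝ (L '' S) := hSv.linear_image L
  by_cases hmem : (p', g) ∈ L '' S
  · obtain ⟨M, hM, hLM⟩ := hmem
    rw [hL, Prod.mk.injEq] at hLM
    refine ⟨fun i j => M j i, ⟨fun i j => (hM j trivial).1 i, fun j => (hM j trivial).2⟩, ?_, ?_⟩
    · ext i
      have := congrFun hLM.2 i
      simpa [Matrix.mulVec, dotProduct, mul_comm] using this
    · ext i
      have := congrFun hLM.1 i
      simpa [Matrix.mulVec, dotProduct, mul_comm] using this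
  · exfalso
    obtain ⟨F, u, hF, hu⟩ := geometric_hahn_banach_closed_point hKv hK.isClosed hmem
    have hFe : ∀ a b : Fin d → ℝ, F (a, b) =
        ∑ i, (F (Pi.single i 1, 0) * a i + F (0, Pi.single i 1) * b i) := by
      intro a b
      have : (a, b) = ∑ i, (a i • ((Pi.single i 1, 0) : (Fin d → ℝ) × (Fin d → ℝ)) +
          b i • ((0, Pi.single i 1) : (Fin d → ℝ) × (Fin d → ℝ))) := by
        ext k
        · simp [Prod.fst_sum, Finset.sum_apply, Pi.single_apply]
        · simp [Prod.snd_sum, Finset.sum_apply, Pi.single_apply]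
      conv_lhs => rw [this]
      simp only [map_sum, map_add, map_smul, smul_eq_mul, mul_comm]
    obtain ⟨c, hc⟩ := H (fun i => F (Pi.single i 1, 0)) (fun i => F (0, Pi.single i 1))
    have h1 := hF (L fun j => Pi.single (c j) 1)
      ⟨_, fun j _ => single_mem_stdSimplex ℝ (c j), rfl⟩
    have h2 : F (L fun j => Pi.single (c j) 1) =
        ∑ j, (F (Pi.single (c j) 1, 0) * p j + F (0, Pi.single (c j) 1) * g j) := by
      have : L (fun j => Pi.single (c j) 1) =
          ∑ j, (p j • ((Pi.single (c j) 1, 0) : (Fin d → ℝ) × (Fin d → ℝ)) +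
          g j • ((0, Pi.single (c j) 1) : (Fin d → ℝ) × (Fin d → ℝ))) := by
        rw [hL]
        ext k
        · simp [Prod.fst_sum, Finset.sum_apply]
        · simp [Prod.snd_sum, Finset.sum_apply]
      rw [this]
      simp only [map_sum, map_add, map_smul, smul_eq_mul, mul_comm]
    rw [hFe] at hu
    linarith

/-- **Thermo-majorization (Theorem 2, classical form).** For Gibbs weights `g_i = e^{-βE_i}`,
a Gibbs-stochastic map taking `p` to `p'` exists iff `p` thermo-majorizes `p'`. -/
theorem gibbsStochastic_iff_thermoMajorizes {d : ℕ} (β : ℝ) (hβ : 0 < β)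
    (E g : Fin d → ℝ) (hg : ∀ i, g i = Real.exp (-β * E i))
    (p p' : Fin d → ℝ) (hp : IsProbVec p) (hp' : IsProbVec p') :
    (∃ Λ : Matrix (Fin d) (Fin d) ℝ,
        ColStochastic Λ ∧ Λ.mulVec g = g ∧ Λ.mulVec p = p') ↔
      (∀ t : ℝ, 0 ≤ t →
        ∑ i, max (p' i - t * g i) 0 ≤ ∑ i, max (p i - t * g i) 0) := by
  have hg0 : ∀ i, 0 < g i := fun i => by rw [hg]; exact Real.exp_pos _
  constructor
  · rintro ⟨Λ, ⟨hnn, hcol⟩, hΛg, hΛp⟩ t _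
    have h1 : ∀ i, max (p' i - t * g i) 0 ≤ ∑ j, Λ i j * max (p j - t * g j) 0 := by
      intro i
      apply max_le
      · have e1 : p' i = ∑ j, Λ i j * p j := (congrFun hΛp i).symm
        have e2 : g i = ∑ j, Λ i j * g j := (congrFun hΛg i).symm
        have e3 : p' i - t * g i = ∑ j, Λ i j * (p j - t * g j) := by
          rw [e1, e2, Finset.mul_sum, ← Finset.sum_sub_distrib]
          exact Finset.sum_congr rfl fun j _ => by ring
        rw [e3]
        exact Finset.sum_le_sum fun j _ => mul_le_mul_of_nonneg_left (le_max_left _ _) (hnn i j)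
      · exact Finset.sum_nonneg fun j _ => mul_nonneg (hnn i j) (le_max_right _ _)
    calc ∑ i, max (p' i - t * g i) 0 ≤ ∑ i, ∑ j, Λ i j * max (p j - t * g j) 0 :=
          Finset.sum_le_sum fun i _ => h1 i
      _ = ∑ j, ∑ i, Λ i j * max (p j - t * g j) 0 := Finset.sum_comm
      _ = ∑ j, max (p j - t * g j) 0 := by
          refine Finset.sum_congr rfl fun j _ => ?_
          rw [← Finset.sum_mul, hcol, one_mul]
  · intro H
    apply aux_sep
    intro y v
    have hne : Nonempty (Fin d) := by
      by_contra h
      rw [not_nonempty_iff] at h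
      have := hp.2
      simp at this
    have hmax : ∀ x : ℝ, ∃ i, ∀ k, y k * x + v k ≤ y i * x + v i := fun x =>
      Finite.exists_max fun k => y k * x + v k
    choose c hc using hmax
    have := aux_convex g p p' hg0 (hp.2.trans hp'.2.symm) hp.1 hp'.1 H
      (fun x => y (c x) * x + v (c x)) (fun m => ⟨y (c m), fun x => by
        have := hc x (c m)
        linarith⟩)
    refine ⟨fun j => c (p j / g j), ?_⟩
    have e : ∀ (q : Fin d → ℝ) (i k : Fin d),
        y k * q i + v k * g i = g i * (y k * (q i / g i) + v k) := by
      intro q i k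
      have := (hg0 i).ne'
      field_simp
    calc ∑ i, (y i * p' i + v i * g i)
        ≤ ∑ i, g i * (y (c (p' i / g i)) * (p' i / g i) + v (c (p' i / g i))) := by
          refine Finset.sum_le_sum fun i _ => ?_
          rw [e p' i i]
          exact mul_le_mul_of_nonneg_left (hc _ _) (hg0 i).le
      _ ≤ _ := this
      _ = _ := Finset.sum_congr rfl fun j _ => (e p j _).symm
end

section
/- Fix β > 0, energies E ∈ ℝ^d, and the Gibbs distribution q_i = e^{-βE_i}/Z with Z = ∑_j e^{-βE_j}. Let p, p' ∈ ℝ^d be probability vectors with strictly positive entries. The following are equivalent: (1) D_α(p‖q) ≥ D_α(p'‖q) for every α ∈ (−∞, ∞); (2) for every ε > 0 there exist a finite dimension m, probability vectors r, s ∈ ℝ^m with s strictly positive, a (dm) × (dm) stochastic matrix Λ satisfying Λ (q ⊗ s) = q ⊗ s, and a probability vector p'' ∈ ℝ^d with d(p'', p') ≤ ε, such that Λ (p ⊗ r) = p'' ⊗ r. -/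
open scoped BigOperators Topology
open Filter

/-- Nonnegative combinations of hinge functions plus an affine function. -/
inductive HingeFn : (ℝ → ℝ) → Prop
  | affine (A B : ℝ) : HingeFn (fun x => A + B * x)
  | add (g : ℝ → ℝ) (c τ : ℝ) (hc : 0 ≤ c) (hg : HingeFn g) :
      HingeFn (fun x => g x + c * max (x - τ) 0)

lemma hinge_rep_aux (f : ℝ → ℝ) (hf : ConvexOn ℝ Set.univ f) (X : Finset ℝ) :
    ∀ z0 ∈ X, (∀ x ∈ X, x ≤ z0) →
      ∃ g, HingeFn g ∧ (∀ x ∈ X, g x = f x) ∧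
        (∃ A B : ℝ, ∀ z, z0 ≤ z → g z = A + B * z) ∧ ∀ z, z0 ≤ z → g z ≤ f z := by
  induction X using Finset.induction_on_max with
  | empty => intro z0 hz0; simp at hz0
  | insert y X hy ih =>
    intro z1 hz1 hmax
    have hz1y : z1 = y := by
      have h1 := hmax y (Finset.mem_insert_self _ _)
      rcases Finset.mem_insert.1 hz1 with h | h
      · exact h
      · exact absurd (hy _ h) (not_lt.2 h1)
    subst hz1y
    rcases X.eq_empty_or_nonempty with hX | hX
    · subst hX
      refine ⟨fun x => (f z1 - (f z1 - f (z1 - 1)) * z1) + (f z1 - f (z1 - 1)) * x,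
        HingeFn.affine _ _, ?_, ⟨_, _, fun z _ => rfl⟩, ?_⟩
      · intro x hx
        simp at hx
        subst hx
        ring
      · intro z hz
        rcases hz.eq_or_lt with h | h
        · subst h; simp only []; linarith
        · have := hf.slope_mono_adjacent (Set.mem_univ (z1 - 1)) (Set.mem_univ z)
            (show z1 - 1 < z1 by linarith) h
          have h2 : z1 - (z1 - 1) = 1 := by ring
          rw [h2, div_one, le_div_iff₀ (by linarith)] at this
          simp only []
          linarith
    · set z0 := X.max' hX with hz0
      have hz0m : z0 ∈ X := X.max'_mem hX
      have hz0max : ∀ x ∈ X, x ≤ z0 := fun x hx => X.le_max' x hx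
      have hlt : z0 < z1 := hy z0 hz0m
      obtain ⟨g, hg, hgX, ⟨A, B, hAB⟩, hgf⟩ := ih z0 hz0m hz0max
      set k := (f z1 - g z1) / (z1 - z0) with hk
      have hk0 : 0 ≤ k := div_nonneg (by linarith [hgf z1 hlt.le]) (by linarith)
      have hkm : k * (z1 - z0) = f z1 - g z1 := by
        rw [hk]; field_simp [show z1 - z0 ≠ 0 by linarith]
      have hge : ∀ z, z0 ≤ z → g z + k * max (z - z0) 0 = (A - k * z0) + (B + k) * z := by
        intro z hz
        rw [max_eq_left (by linarith), hAB z hz]; ring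
      refine ⟨fun x => g x + k * max (x - z0) 0, HingeFn.add _ _ _ hk0 hg, ?_,
        ⟨A - k * z0, B + k, fun z hz => hge z (by linarith)⟩, ?_⟩
      · intro x hx
        rcases Finset.mem_insert.1 hx with h | h
        · subst h
          simp only []
          rw [max_eq_left (by linarith), hkm]; ring
        · have := hz0max x h
          simp only []
          rw [max_eq_right (by linarith), hgX x h]; ring
      · intro z hz
        simp only []
        rcases hz.eq_or_lt with h | h
        · subst h
          rw [max_eq_left (by linarith), hkm]; linarith
        · have h3 := hf.slope_mono_adjacent (Set.mem_univ z0) (Set.mem_univ z) hlt h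
          have e0 := hgX z0 hz0m
          have e0' := hAB z0 le_rfl
          have e1 := hAB z1 hlt.le
          rw [max_eq_left (by linarith), hAB z (by linarith)]
          have : (f z1 - f z0) / (z1 - z0) = B + k := by
            rw [div_eq_iff (by linarith)]; rw [← e0]; linarith
          rw [this, le_div_iff₀ (by linarith)] at h3
          linarith

lemma hinge_rep (f : ℝ → ℝ) (hf : ConvexOn ℝ Set.univ f) (X : Finset ℝ) :
    ∃ g, HingeFn g ∧ (∀ x ∈ X, g x = f x) := by
  rcases X.eq_empty_or_nonempty with hX | hX
  · subst hX
    exact ⟨_, HingeFn.affine 0 0, by simp⟩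
  · obtain ⟨g, hg, h, _⟩ := hinge_rep_aux f hf X _ (X.max'_mem hX) (fun x hx => X.le_max' x hx)
    exact ⟨g, hg, h⟩

lemma hinge_ineq {X : Type*} [Fintype X] (P P' Q : X → ℝ) (hQ : ∀ x, 0 < Q x)
    (hsum : ∑ x, P x = ∑ x, P' x)
    (h : ∀ τ : ℝ, ∑ x, max (P' x - τ * Q x) 0 ≤ ∑ x, max (P x - τ * Q x) 0)
    (g : ℝ → ℝ) (hg : HingeFn g) :
    ∑ x, Q x * g (P' x / Q x) ≤ ∑ x, Q x * g (P x / Q x) := by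
  induction hg with
  | affine A B =>
    have key : ∀ R : X → ℝ, ∑ x, Q x * (A + B * (R x / Q x)) = A * ∑ x, Q x + B * ∑ x, R x := by
      intro R
      rw [Finset.mul_sum, Finset.mul_sum, ← Finset.sum_add_distrib]
      refine Finset.sum_congr rfl fun x _ => ?_
      have := (hQ x).ne'
      field_simp
    rw [key, key, hsum]
  | add g c τ hc hg ih =>
    have key : ∀ R : X → ℝ, ∑ x, Q x * (g (R x / Q x) + c * max (R x / Q x - τ) 0)
        = ∑ x, Q x * g (R x / Q x) + c * ∑ x, max (R x - τ * Q x) 0 := by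
      intro R
      rw [Finset.mul_sum, ← Finset.sum_add_distrib]
      refine Finset.sum_congr rfl fun x _ => ?_
      have h1 : max (R x - τ * Q x) 0 = Q x * max (R x / Q x - τ) 0 := by
        rw [mul_max_of_nonneg _ _ (hQ x).le]
        have := (hQ x).ne'
        congr 1
        · field_simp
        · ring
      rw [h1]; ring
    rw [key, key]
    exact add_le_add ih (mul_le_mul_of_nonneg_left (h τ) hc)

lemma convex_ineq {X : Type*} [Fintype X] (P P' Q : X → ℝ) (hQ : ∀ x, 0 < Q x)
    (hsum : ∑ x, P x = ∑ x, P' x)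
    (h : ∀ τ : ℝ, ∑ x, max (P' x - τ * Q x) 0 ≤ ∑ x, max (P x - τ * Q x) 0)
    (f : ℝ → ℝ) (hf : ConvexOn ℝ Set.univ f) :
    ∑ x, Q x * f (P' x / Q x) ≤ ∑ x, Q x * f (P x / Q x) := by
  classical
  obtain ⟨g, hg, hgf⟩ := hinge_rep f hf
    (Finset.univ.image (fun x => P x / Q x) ∪ Finset.univ.image (fun x => P' x / Q x))
  have := hinge_ineq P P' Q hQ hsum h g hg
  have e1 : ∀ x, g (P x / Q x) = f (P x / Q x) := fun x => hgf _ (by simp)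
  have e2 : ∀ x, g (P' x / Q x) = f (P' x / Q x) := fun x => hgf _ (by simp)
  simpa [e1, e2] using this

lemma blackwell {X : Type*} [Fintype X] [DecidableEq X] [Nonempty X] (P P' Q : X → ℝ)
    (hQ : ∀ x, 0 < Q x)
    (hsum : ∑ x, P x = ∑ x, P' x)
    (h : ∀ τ : ℝ, ∑ x, max (P' x - τ * Q x) 0 ≤ ∑ x, max (P x - τ * Q x) 0) :
    ∃ Λ : Matrix X X ℝ, ColStochastic Λ ∧ Λ.mulVec Q = Q ∧ Λ.mulVec P = P' := by
  classical
  let S : Set (X → X → ℝ) := {Λ | (∀ i j, 0 ≤ Λ i j) ∧ ∀ j, ∑ i, Λ i j = 1}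
  let T : (X → X → ℝ) → (X → ℝ) × (X → ℝ) :=
    fun Λ => (fun i => ∑ j, Λ i j * P j, fun i => ∑ j, Λ i j * Q j)
  have hTc : Continuous T := by fun_prop
  have hScl : IsClosed S := by
    have : S = (⋂ i, ⋂ j, {Λ : X → X → ℝ | 0 ≤ Λ i j}) ∩ ⋂ j, {Λ : X → X → ℝ | ∑ i, Λ i j = 1} := by
      ext Λ; simp [S]
    rw [this]
    refine IsClosed.inter ?_ ?_
    · exact isClosed_iInter fun i => isClosed_iInter fun j =>
        isClosed_le continuous_const (by fun_prop)
    · exact isClosed_iInter fun j => isClosed_eq (by fun_prop) continuous_const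
  have hSc : IsCompact S := by
    have hc : IsCompact (Set.univ.pi fun _ : X => Set.univ.pi fun _ : X => Set.Icc (0:ℝ) 1) :=
      isCompact_univ_pi fun _ => isCompact_univ_pi fun _ => isCompact_Icc
    refine hc.of_isClosed_subset hScl ?_
    rintro Λ ⟨h1, h2⟩ i - j -
    refine ⟨h1 i j, ?_⟩
    rw [← h2 j]
    exact Finset.single_le_sum (f := fun i => Λ i j) (fun i _ => h1 i j) (Finset.mem_univ i)
  have hSconv : Convex ℝ S := by
    rintro x ⟨hx1, hx2⟩ y ⟨hy1, hy2⟩ a b ha hb hab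
    refine ⟨fun i j => ?_, fun j => ?_⟩
    · have := mul_nonneg ha (hx1 i j)
      have := mul_nonneg hb (hy1 i j)
      simp only [Pi.add_apply, Pi.smul_apply, smul_eq_mul]
      linarith
    · simp only [Pi.add_apply, Pi.smul_apply, smul_eq_mul]
      rw [Finset.sum_add_distrib, ← Finset.mul_sum, ← Finset.mul_sum, hx2, hy2]
      linarith
  have hTlin : IsLinearMap ℝ T := by
    constructor
    · intro x y
      ext i <;> simp [T, add_mul, Finset.sum_add_distrib]
    · intro c x
      ext i <;> simp [T, Finset.mul_sum, mul_assoc]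
  have hKconv : Convex ℝ (T '' S) := hSconv.is_linear_image hTlin
  have hKcl : IsClosed (T '' S) := (hSc.image hTc).isClosed
  by_cases hmem : (P', Q) ∈ T '' S
  · obtain ⟨Λ, hΛ, hT⟩ := hmem
    refine ⟨Λ, hΛ, ?_, ?_⟩
    · ext i
      exact congrFun (congrArg Prod.snd hT) i
    · ext i
      exact congrFun (congrArg Prod.fst hT) i
  exfalso
  obtain ⟨F, w, hF1, hF2⟩ := geometric_hahn_banach_closed_point hKconv hKcl hmem
  let u : X → ℝ := fun i => F (Pi.single i 1, 0)
  let v : X → ℝ := fun i => F (0, Pi.single i 1)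
  have hF : ∀ a b : X → ℝ, F (a, b) = ∑ i, (u i * a i + v i * b i) := by
    intro a b
    have h1 : F (a, b) = F (a, 0) + F (0, b) := by rw [← map_add]; simp
    have h2 := LinearMap.pi_apply_eq_sum_univ (F.toLinearMap ∘ₗ LinearMap.inl ℝ (X → ℝ) (X → ℝ)) a
    have h3 := LinearMap.pi_apply_eq_sum_univ (F.toLinearMap ∘ₗ LinearMap.inr ℝ (X → ℝ) (X → ℝ)) b
    have e : ∀ i : X, (fun j => if i = j then (1:ℝ) else 0) = Pi.single i 1 := by
      intro i; ext j; simp [Pi.single_apply, eq_comm]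
    simp [e] at h2 h3
    rw [h1, h2, h3, Finset.sum_add_distrib]
    congr 1 <;> exact Finset.sum_congr rfl fun i _ => mul_comm _ _
  let φ : ℝ → ℝ := fun x => Finset.univ.sup' Finset.univ_nonempty (fun i => u i * x + v i)
  have hφle : ∀ x i, u i * x + v i ≤ φ x := fun x i =>
    Finset.le_sup' (fun i => u i * x + v i) (Finset.mem_univ i)
  have hφ : ConvexOn ℝ Set.univ φ := by
    refine ⟨convex_univ, fun x _ y _ a b ha hb hab => ?_⟩
    refine Finset.sup'_le _ _ fun i _ => ?_
    have h1 := mul_le_mul_of_nonneg_left (hφle x i) ha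
    have h2 := mul_le_mul_of_nonneg_left (hφle y i) hb
    simp only [smul_eq_mul]
    have h3 : v i = a * v i + b * v i := by rw [← add_mul, hab, one_mul]
    linarith
  have hch : ∀ j, ∃ i, φ (P j / Q j) = u i * (P j / Q j) + v i := by
    intro j
    obtain ⟨i, -, hi⟩ := Finset.exists_mem_eq_sup' (Finset.univ_nonempty (α := X))
      (fun i => u i * (P j / Q j) + v i)
    exact ⟨i, hi⟩
  choose ι hι using hch
  let Λ : X → X → ℝ := fun i j => if i = ι j then 1 else 0
  have hΛS : Λ ∈ S := by
    refine ⟨fun i j => ?_, fun j => ?_⟩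
    · simp only [Λ]; split_ifs <;> norm_num
    · simp [Λ]
  have h4 := hF1 _ ⟨Λ, hΛS, rfl⟩
  have h5 : F (T Λ) = ∑ j, Q j * φ (P j / Q j) := by
    simp only [T]
    rw [hF]
    have : ∀ j, Q j * φ (P j / Q j) = ∑ i, (u i * (Λ i j * P j) + v i * (Λ i j * Q j)) := by
      intro j
      rw [hι j]
      simp only [Λ, ite_mul, one_mul, zero_mul, mul_ite, mul_zero]
      rw [Finset.sum_add_distrib]
      simp
      have := (hQ j).ne'
      field_simp
    simp_rw [this]
    rw [Finset.sum_comm]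
    refine Finset.sum_congr rfl fun i _ => ?_
    rw [Finset.mul_sum, Finset.mul_sum, Finset.sum_add_distrib]
  have h6 := convex_ineq P P' Q hQ hsum h φ hφ
  have h7 : F (P', Q) ≤ ∑ x, Q x * φ (P' x / Q x) := by
    rw [hF]
    refine Finset.sum_le_sum fun i _ => ?_
    have h8 := mul_le_mul_of_nonneg_left (hφle (P' i / Q i) i) (hQ i).le
    have := (hQ i).ne'
    calc _ = Q i * (u i * (P' i / Q i) + v i) := by field_simp
      _ ≤ _ := h8
  linarith

lemma descFactorial_approx (n M a k : ℕ) (hM : 0 < M) (ha : a ≤ M) (hk : k ≤ n) :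
    |(a.descFactorial k : ℝ) / (M:ℝ) ^ k - ((a:ℝ) / M) ^ k| ≤ k * n / M := by
  have hM' : (0:ℝ) < M := by exact_mod_cast hM
  induction k with
  | zero => simp
  | succ k ih =>
    have ih := ih (by omega)
    set X := (a.descFactorial k : ℝ) / (M:ℝ) ^ k with hX
    set y := (a:ℝ) / M with hy
    set u := ((a - k : ℕ) : ℝ) / M with hu
    have e1 : (a.descFactorial (k+1) : ℝ) / (M:ℝ) ^ (k+1) = u * X := by
      rw [Nat.descFactorial_succ, hu, hX]; push_cast; rw [pow_succ]; field_simp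
    have haM : (a:ℝ) ≤ M := by exact_mod_cast ha
    have hy0 : 0 ≤ y := by positivity
    have hy1 : y ≤ 1 := by rw [hy, div_le_one hM']; exact haM
    have hu0 : 0 ≤ u := by positivity
    have huy : u ≤ y := by
      rw [hu, hy]; gcongr; omega
    have hyu : y - u ≤ n / M := by
      rw [hu, hy, ← sub_div]; gcongr
      have : (a:ℝ) ≤ ((a-k:ℕ):ℝ) + n := by
        have : a ≤ (a - k) + n := by omega
        exact_mod_cast this
      linarith
    have hyk0 : 0 ≤ y ^ k := by positivity
    have hyk1 : y ^ k ≤ 1 := pow_le_one₀ hy0 hy1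
    rw [e1, pow_succ]
    have e2 : u * X - y ^ k * y = u * (X - y ^ k) - (y - u) * y ^ k := by ring
    rw [e2]
    have hn0 : (0:ℝ) ≤ n / M := by positivity
    calc |u * (X - y ^ k) - (y - u) * y ^ k| ≤ |u * (X - y ^ k)| + |(y - u) * y ^ k| := abs_sub _ _
      _ ≤ 1 * (k * n / M) + n / M * 1 := by
        rw [abs_mul, abs_mul, abs_of_nonneg hu0, abs_of_nonneg hyk0,
          abs_of_nonneg (show 0 ≤ y - u by linarith)]
        gcongr
        linarith
      _ = _ := by push_cast; ring

lemma choose_desc (N n a k : ℕ) (hk : k ≤ n) (hka : k ≤ a) (ha : a ≤ N + n) :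
    (N.choose (a - k) : ℝ) * (a.factorial * (N + n - a).factorial)
      = N.factorial * (a.descFactorial k * (N + n - a).descFactorial (n - k)) := by
  by_cases hb : n - k ≤ N + n - a
  · have h1 : a - k ≤ N := by omega
    have h2 := Nat.choose_mul_factorial_mul_factorial h1
    have h3 := Nat.factorial_mul_descFactorial hka
    have h4 := Nat.factorial_mul_descFactorial hb
    have h5 : N + n - a - (n - k) = N - (a - k) := by omega
    rw [h5] at h4
    have : N.choose (a - k) * (a.factorial * (N + n - a).factorial)
      = N.factorial * (a.descFactorial k * (N + n - a).descFactorial (n - k)) := by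
      rw [← h2, ← h3, ← h4]; ring
    exact_mod_cast this
  · have h1 : N < a - k := by omega
    rw [Nat.choose_eq_zero_of_lt h1, Nat.descFactorial_of_lt (show N + n - a < n - k by omega)]
    simp

lemma polya (n : ℕ) (c : ℕ → ℝ) (h0 : 0 < c 0) (hn : 0 < c n) (hc : ∀ k, n < k → c k = 0)
    (hpos : ∀ z : ℝ, 0 < z → 0 < ∑ k ∈ Finset.range (n+1), c k * z ^ k) :
    ∃ N : ℕ, ∀ a : ℕ, 0 ≤ ∑ j ∈ Finset.range (a+1), (N.choose j : ℝ) * c (a - j) := by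
  let f : ℝ → ℝ := fun x => ∑ k ∈ Finset.range (n+1), c k * (x ^ k * (1 - x) ^ (n - k))
  have hf : Continuous f := by fun_prop
  have hfpos : ∀ x ∈ Set.Icc (0:ℝ) 1, 0 < f x := by
    rintro x ⟨hx0, hx1⟩
    rcases hx1.eq_or_lt with h | h
    · subst h
      simp only [f]
      rw [Finset.sum_eq_single n]
      · simpa using hn
      · intro k hk hkn
        have : n - k ≠ 0 := by have := Finset.mem_range.1 hk; omega
        simp [this]
      · simp
    · rcases hx0.eq_or_lt with h' | h'
      · subst h'
        simp only [f]
        rw [Finset.sum_eq_single 0]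
        · simpa using h0
        · intro k hk hkn
          simp [hkn]
        · simp
      · have h1x : 0 < 1 - x := by linarith
        have := hpos (x / (1 - x)) (by positivity)
        have e : f x = (1 - x) ^ n * ∑ k ∈ Finset.range (n+1), c k * (x / (1-x)) ^ k := by
          simp only [f]
          rw [Finset.mul_sum]
          refine Finset.sum_congr rfl fun k hk => ?_
          have hk' : k ≤ n := by have := Finset.mem_range.1 hk; omega
          have : (1 - x) ^ n = (1 - x) ^ (n - k) * (1 - x) ^ k := by
            rw [← pow_add]; congr 1; omega
          rw [this, div_pow]
          field_simp
        rw [e]; positivity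
  obtain ⟨x0, hx0, hmin⟩ := isCompact_Icc.exists_isMinOn (Set.nonempty_Icc.2 zero_le_one)
    hf.continuousOn
  have hm := hfpos x0 hx0
  set m := f x0 with hmdef
  have hm' : ∀ x ∈ Set.Icc (0:ℝ) 1, m ≤ f x := fun x hx => hmin hx
  let C : ℝ := ∑ k ∈ Finset.range (n+1), |c k|
  obtain ⟨N, hN⟩ := exists_nat_gt (C * (2 * n * n) / m)
  have hC0 : 0 ≤ C := Finset.sum_nonneg fun _ _ => abs_nonneg _
  have hNpos : (0:ℝ) < N := lt_of_le_of_lt (by positivity) hN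
  refine ⟨N, fun a => ?_⟩
  -- reindex
  have hre : ∑ j ∈ Finset.range (a+1), (N.choose j : ℝ) * c (a - j)
      = ∑ k ∈ Finset.range (a+1), (N.choose (a - k) : ℝ) * c k := by
    rw [← Finset.sum_range_reflect]
    refine Finset.sum_congr rfl fun k hk => ?_
    have := Finset.mem_range.1 hk
    congr 3; omega
  rw [hre]
  by_cases haN : N + n < a
  · refine (Finset.sum_eq_zero fun k hk => ?_).ge
    by_cases hkn : n < k
    · rw [hc k hkn, mul_zero]
    · rw [Nat.choose_eq_zero_of_lt (by omega)]; simp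
  push Not at haN
  set M := N + n with hMdef
  have hMpos : 0 < M := by have : 0 < N := by exact_mod_cast hNpos
                           omega
  have hM' : (0:ℝ) < M := by exact_mod_cast hMpos
  have hre2 : ∑ k ∈ Finset.range (a+1), (N.choose (a - k) : ℝ) * c k
      = N.factorial * (M:ℝ)^n / (a.factorial * (M - a).factorial) *
        ∑ k ∈ Finset.range (n+1), c k * ((a.descFactorial k : ℝ) / (M:ℝ)^k *
          (((M-a).descFactorial (n-k) : ℝ) / (M:ℝ)^(n-k))) := by
    have e1 : ∑ k ∈ Finset.range (a+1), (N.choose (a - k) : ℝ) * c k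
        = ∑ k ∈ Finset.range (max a n + 1), if k ≤ a then (N.choose (a - k) : ℝ) * c k else 0 := by
      rw [← Finset.sum_filter]
      refine Finset.sum_congr ?_ fun _ _ => rfl
      ext k; simp; omega
    rw [e1]
    rw [← Finset.sum_subset (s₁ := Finset.range (n+1))]
    · rw [Finset.mul_sum]
      refine Finset.sum_congr rfl fun k hk => ?_
      have hk' : k ≤ n := by have := Finset.mem_range.1 hk; omega
      split_ifs with hka
      · have := choose_desc N n a k hk' hka haN
        rw [← hMdef] at this
        have e2 : (M:ℝ)^n = (M:ℝ)^k * (M:ℝ)^(n-k) := by rw [← pow_add]; congr 1; omega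
        have f1 : (a.factorial : ℝ) ≠ 0 := by exact_mod_cast a.factorial_ne_zero
        have f2 : ((M-a).factorial : ℝ) ≠ 0 := by exact_mod_cast (M-a).factorial_ne_zero
        rw [e2]
        field_simp
        linear_combination c k * this
      · rw [Nat.descFactorial_of_lt (by omega)]; simp
    · intro k; simp; omega
    · intro k _ hk
      rw [hc k (by simpa using hk)]; simp
  rw [hre2]
  refine mul_nonneg (by positivity) ?_
  set x : ℝ := (a:ℝ) / M with hx
  have haM : (a:ℝ) ≤ M := by exact_mod_cast haN
  have hx0 : 0 ≤ x := by positivity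
  have hx1 : x ≤ 1 := by rw [hx, div_le_one hM']; exact haM
  have h1x : ((M - a : ℕ):ℝ) / M = 1 - x := by
    rw [Nat.cast_sub haN, hx]; field_simp
  have hfx := hm' x ⟨hx0, hx1⟩
  have hterm : ∀ k ∈ Finset.range (n+1),
      |((a.descFactorial k : ℝ) / (M:ℝ)^k * (((M-a).descFactorial (n-k) : ℝ) / (M:ℝ)^(n-k)))
        - x ^ k * (1-x)^(n-k)| ≤ 2 * n * n / M := by
    intro k hk
    have hk' : k ≤ n := by have := Finset.mem_range.1 hk; omega
    have b1 := descFactorial_approx n M a k hMpos haN hk'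
    have b2 := descFactorial_approx n M (M-a) (n-k) hMpos (Nat.sub_le _ _) (Nat.sub_le _ _)
    rw [h1x] at b2
    rw [← hx] at b1
    set A := (a.descFactorial k : ℝ) / (M:ℝ)^k
    set B := ((M-a).descFactorial (n-k) : ℝ) / (M:ℝ)^(n-k)
    have hA0 : 0 ≤ A := by positivity
    have hA1 : A ≤ 1 := by
      rw [div_le_one (by positivity)]
      calc (a.descFactorial k : ℝ) ≤ (a:ℝ)^k := by exact_mod_cast Nat.descFactorial_le_pow a k
        _ ≤ _ := by gcongr
    have hy0 : 0 ≤ (1-x)^(n-k) := pow_nonneg (by linarith) _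
    have hy1 : (1-x)^(n-k) ≤ 1 := pow_le_one₀ (by linarith) (by linarith)
    have e : A * B - x^k * (1-x)^(n-k) = A * (B - (1-x)^(n-k)) + (A - x^k) * (1-x)^(n-k) := by ring
    rw [e]
    have hkn : (k:ℝ) ≤ n := by exact_mod_cast hk'
    have hkn2 : ((n-k:ℕ):ℝ) ≤ n := by exact_mod_cast Nat.sub_le _ _
    calc _ ≤ |A * (B - (1-x)^(n-k))| + |(A - x^k) * (1-x)^(n-k)| := abs_add_le _ _
      _ ≤ 1 * (n * n / M) + n * n / M * 1 := by
        rw [abs_mul, abs_mul, abs_of_nonneg hA0, abs_of_nonneg hy0]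
        gcongr
        · exact b2.trans (by gcongr)
        · exact b1.trans (by gcongr)
      _ = _ := by ring
  have hdiff : |∑ k ∈ Finset.range (n+1), c k * ((a.descFactorial k : ℝ) / (M:ℝ)^k *
          (((M-a).descFactorial (n-k) : ℝ) / (M:ℝ)^(n-k))) - f x| ≤ C * (2 * n * n / M) := by
    simp only [f]
    rw [← Finset.sum_sub_distrib, Finset.sum_mul]
    refine (Finset.abs_sum_le_sum_abs _ _).trans (Finset.sum_le_sum fun k hk => ?_)
    rw [← mul_sub, abs_mul]
    exact mul_le_mul_of_nonneg_left (hterm k hk) (abs_nonneg _)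
  have hNM : (N:ℝ) ≤ M := by rw [hMdef]; push_cast; linarith [(Nat.cast_nonneg n : (0:ℝ) ≤ n)]
  have hsmall : C * (2 * n * n / M) ≤ m := by
    rw [div_lt_iff₀ hm] at hN
    rw [← mul_div_assoc, div_le_iff₀ hM']
    nlinarith
  have := (abs_le.1 hdiff).1
  linarith

lemma tail_pos (g : ℝ → ℝ) (hg : Continuous g) (b u a : ℝ) (hbu : b ≤ u) (hua : u < a)
    (hpos : ∀ t ∈ Set.Icc u a, 0 < g t) :
    ∃ L0 : ℝ, 0 < L0 ∧ ∀ L, L0 ≤ L → 0 < ∫ t in b..a, g t * Real.exp (L * t) := by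
  obtain ⟨x0, hx0, hmin⟩ := isCompact_Icc.exists_isMinOn (Set.nonempty_Icc.2 hua.le)
    hg.continuousOn
  have hγ := hpos x0 hx0
  set γ := g x0 with hγdef
  have hγ' : ∀ t ∈ Set.Icc u a, γ ≤ g t := fun t ht => hmin ht
  obtain ⟨M, hM⟩ := isCompact_Icc.exists_bound_of_continuousOn (s := Set.Icc b u) hg.continuousOn
  have hM0 : 0 ≤ M := (norm_nonneg _).trans (hM b ⟨le_rfl, hbu⟩)
  have hD : 0 < γ * ((a - u) ^ 2 / 2) := by have : 0 < a - u := by linarith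
                                            positivity
  refine ⟨M * (u - b) / (γ * ((a - u) ^ 2 / 2)) + 1, ?_, ?_⟩
  · have : 0 ≤ u - b := by linarith
    positivity
  intro L hL
  have hL0 : 0 < L := lt_of_lt_of_le (by have : 0 ≤ u - b := by linarith
                                         positivity) hL
  have hLD : M * (u - b) < L * (γ * ((a - u) ^ 2 / 2)) := by
    have : M * (u - b) / (γ * ((a - u) ^ 2 / 2)) < L := by linarith
    rwa [div_lt_iff₀ hD] at this
  have e : (∫ t in b..a, g t * Real.exp (L * t))
      = Real.exp (L * u) * ∫ t in b..a, g t * Real.exp (L * (t - u)) := by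
    rw [← intervalIntegral.integral_const_mul]
    refine intervalIntegral.integral_congr fun t _ => ?_
    rw [show L * t = L * u + L * (t - u) by ring, Real.exp_add]; ring
  rw [e]
  refine mul_pos (Real.exp_pos _) ?_
  have hc : Continuous fun t => g t * Real.exp (L * (t - u)) := by fun_prop
  rw [← intervalIntegral.integral_add_adjacent_intervals (hc.intervalIntegrable b u)
    (hc.intervalIntegrable u a)]
  have h1 : ∫ t in b..u, (-M : ℝ) ≤ ∫ t in b..u, g t * Real.exp (L * (t - u)) := by
    refine intervalIntegral.integral_mono_on hbu (by simp) (hc.intervalIntegrable _ _) ?_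
    intro t ht
    have h2 := (abs_le.1 (hM t ht)).1
    have h3 : Real.exp (L * (t - u)) ≤ 1 := by
      rw [Real.exp_le_one_iff]
      exact mul_nonpos_of_nonneg_of_nonpos hL0.le (by linarith [ht.2])
    have h4 := Real.exp_pos (L * (t - u))
    nlinarith
  have h2 : ∫ t in u..a, γ * L * (t - u) ≤ ∫ t in u..a, g t * Real.exp (L * (t - u)) := by
    refine intervalIntegral.integral_mono_on hua.le
      (Continuous.intervalIntegrable (by fun_prop) _ _) (hc.intervalIntegrable _ _) ?_
    intro t ht
    have h3 := hγ' t ht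
    have h4 := Real.add_one_le_exp (L * (t - u))
    have h5 : 0 ≤ L * (t - u) := mul_nonneg hL0.le (by linarith [ht.1])
    calc γ * L * (t - u) = γ * (L * (t - u)) := by ring
      _ ≤ g t * Real.exp (L * (t - u)) := by
        apply mul_le_mul h3 (by linarith) h5 (by linarith)
  have h3 : ∫ t in u..a, γ * L * (t - u) = γ * L * ((a - u) ^ 2 / 2) := by
    rw [intervalIntegral.integral_const_mul]
    congr 1
    rw [intervalIntegral.integral_sub (by simp) (by simp)]
    simp
    ring
  rw [h3] at h2
  simp at h1
  nlinarith

lemma tail_neg (g : ℝ → ℝ) (hg : Continuous g) (b u a : ℝ) (hbu : b < u) (hua : u ≤ a)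
    (hpos : ∀ t ∈ Set.Icc b u, 0 < g t) :
    ∃ L0 : ℝ, 0 < L0 ∧ ∀ L, L ≤ -L0 → 0 < ∫ t in b..a, g t * Real.exp (L * t) := by
  obtain ⟨L0, h0, h⟩ := tail_pos (fun t => g (-t)) (by fun_prop) (-a) (-u) (-b) (by linarith)
    (by linarith) (fun t ht => hpos _ ⟨by linarith [ht.2], by linarith [ht.1]⟩)
  refine ⟨L0, h0, fun L hL => ?_⟩
  have := h (-L) (by linarith)
  have e : (∫ t in (-a)..(-b), g (-t) * Real.exp (-L * t))
      = ∫ t in b..a, g t * Real.exp (L * t) := by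
    have := intervalIntegral.integral_comp_neg (a := -a) (b := -b)
      (fun t => g t * Real.exp (L * t))
    rw [neg_neg, neg_neg] at this
    rw [← this]
    refine intervalIntegral.integral_congr fun t _ => ?_
    simp
  rwa [e] at this

lemma step_lemma (G : ℝ → ℝ) (hG : Continuous G) (b b2 a2 a : ℝ) (hb : b < b2) (hba : b2 ≤ a2)
    (ha : a2 < a) (hlo : ∀ t, t ≤ b2 → 0 ≤ G t) (hhi : ∀ t, a2 ≤ t → 0 ≤ G t)
    (hlo' : ∀ t, b ≤ t → t ≤ b2 → 0 < G t) (hhi' : ∀ t, a2 ≤ t → t ≤ a → 0 < G t)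
    (ω : ℝ) (hω : 0 < ω) (hJ : ∀ L : ℝ, 0 < ∫ t in b..a, (G t - ω) * Real.exp (L * t)) :
    ∃ h : ℝ, 0 < h ∧ ∃ N : ℕ, ∀ t : ℝ,
      0 ≤ ∑ j ∈ Finset.range (N+1), (N.choose j : ℝ) * G (t - j * h) := by
  have huc := isCompact_Icc.uniformContinuousOn_of_continuous (s := Set.Icc b a) hG.continuousOn
  rw [Metric.uniformContinuousOn_iff] at huc
  obtain ⟨δ, hδ, huc⟩ := huc ω hω
  have hab : 0 < a - b := by linarith
  obtain ⟨n, hn⟩ := exists_nat_gt ((a - b) / min δ (min (b2 - b) (a - a2)))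
  have hmin : 0 < min δ (min (b2 - b) (a - a2)) :=
    lt_min hδ (lt_min (by linarith) (by linarith))
  have hn0 : (0:ℝ) < n := lt_trans (by positivity) hn
  set h := (a - b) / n with hh
  have hhpos : 0 < h := by positivity
  have hhlt : h < min δ (min (b2 - b) (a - a2)) := by
    rw [div_lt_iff₀ hmin] at hn
    rw [hh, div_lt_iff₀ hn0]; linarith
  have hhδ : h < δ := hhlt.trans_le (min_le_left _ _)
  have hhb : h < b2 - b := hhlt.trans_le ((min_le_right _ _).trans (min_le_left _ _))
  have hha : h < a - a2 := hhlt.trans_le ((min_le_right _ _).trans (min_le_right _ _))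
  have hnh : n * h = a - b := by rw [hh]; field_simp
  obtain ⟨n', rfl⟩ : ∃ n', n = n' + 1 := ⟨n - 1, by
    have : 0 < n := by exact_mod_cast hn0
    omega⟩
  -- cell minima
  have hcell : ∀ k : ℕ, ∃ ξ ∈ Set.Icc (b + k * h) (b + (k + 1) * h),
      ∀ t ∈ Set.Icc (b + k * h) (b + (k + 1) * h), G ξ ≤ G t := by
    intro k
    obtain ⟨ξ, hξ, hm⟩ := isCompact_Icc.exists_isMinOn
      (s := Set.Icc (b + k * h) (b + (k + 1) * h)) (Set.nonempty_Icc.2 (by nlinarith))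
      hG.continuousOn
    exact ⟨ξ, hξ, fun t ht => hm ht⟩
  choose ξ hξ hξmin using hcell
  let c : ℕ → ℝ := fun k => if k ≤ n' then G (ξ k) else 0
  have hcellsub : ∀ k : ℕ, k ≤ n' → b + (k+1) * h ≤ a := by
    intro k hk
    have : ((k:ℝ)+1) * h ≤ ((n'+1:ℕ):ℝ) * h := by
      gcongr; push_cast; have : (k:ℝ) ≤ n' := by exact_mod_cast hk
      linarith
    linarith
  have hkh : ∀ k : ℕ, 0 ≤ (k:ℝ) * h := fun k => by positivity
  have hc0 : 0 < c 0 := by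
    have h1 := hξ 0
    simp only [c, Nat.zero_le, if_true]
    simp at h1
    exact hlo' _ h1.1 (by linarith [h1.2])
  have hcn : 0 < c n' := by
    have h1 := hξ n'
    simp only [c, le_refl, if_true]
    push_cast at hnh
    exact hhi' _ (by linarith [h1.1]) (by linarith [h1.2])
  have hcgt : ∀ k, n' < k → c k = 0 := fun k hk => by simp [c, not_le.2 hk]
  have hpos : ∀ z : ℝ, 0 < z → 0 < ∑ k ∈ Finset.range (n'+1), c k * z ^ k := by
    intro z hz
    set L := Real.log z / h with hL
    have hzk : ∀ k : ℕ, z ^ k = Real.exp (L * (k * h)) := by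
      intro k
      have : L * (k * h) = k * Real.log z := by rw [hL]; field_simp
      rw [this, Real.exp_nat_mul, Real.exp_log hz]
    set w := ∫ t in b..(b + h), Real.exp (L * t) with hw
    have hwpos : 0 < w := intervalIntegral.intervalIntegral_pos_of_pos
      (Continuous.intervalIntegrable (by fun_prop) _ _) (fun t => Real.exp_pos _) (by linarith)
    have hwk : ∀ k : ℕ, ∫ t in (b + k * h)..(b + (k+1) * h), Real.exp (L * t) = z ^ k * w := by
      intro k
      have := intervalIntegral.integral_comp_add_right (a := b) (b := b + h)
        (fun t => Real.exp (L * t)) (k * h)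
      rw [show b + ((k:ℝ)+1) * h = b + h + k * h by ring, ← this, hw,
        ← intervalIntegral.integral_const_mul]
      refine intervalIntegral.integral_congr fun t _ => ?_
      rw [hzk, ← Real.exp_add]; congr 1; ring
    have hcont : Continuous fun t => (G t - ω) * Real.exp (L * t) := by fun_prop
    have hsum := intervalIntegral.sum_integral_adjacent_intervals (n := n'+1)
      (a := fun k : ℕ => b + k * h) (μ := MeasureTheory.volume)
      (f := fun t => (G t - ω) * Real.exp (L * t))
      (fun k _ => hcont.intervalIntegrable _ _)
    have hJL := hJ L
    simp only [Nat.cast_zero, zero_mul, add_zero, hnh, add_sub_cancel] at hsum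
    rw [← hsum] at hJL
    have hle : ∑ k ∈ Finset.range (n'+1),
        ∫ t in (b + (k:ℝ) * h)..(b + ((k+1:ℕ):ℝ) * h), (G t - ω) * Real.exp (L * t)
        ≤ ∑ k ∈ Finset.range (n'+1), c k * z ^ k * w := by
      refine Finset.sum_le_sum fun k hk => ?_
      have hk' : k ≤ n' := by have := Finset.mem_range.1 hk; omega
      rw [mul_assoc, ← hwk k, ← intervalIntegral.integral_const_mul]
      push_cast
      refine intervalIntegral.integral_mono_on (by nlinarith) (hcont.intervalIntegrable _ _)
        (Continuous.intervalIntegrable (by fun_prop) _ _) ?_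
      intro t ht
      refine mul_le_mul_of_nonneg_right ?_ (Real.exp_pos _).le
      simp only [c, hk', if_true]
      have h1 := hξ k
      have h2 := hcellsub k hk'
      have h3 := hkh k
      have := huc t ⟨by linarith [ht.1], by linarith [ht.2]⟩ (ξ k)
        ⟨by linarith [h1.1], by linarith [h1.2]⟩ (by
          rw [Real.dist_eq, abs_lt]
          constructor <;> nlinarith [h1.1, h1.2, ht.1, ht.2])
      rw [Real.dist_eq] at this
      linarith [(abs_lt.1 this).2]
    rw [← Finset.sum_mul] at hle
    have := lt_of_lt_of_le hJL hle
    exact pos_of_mul_pos_left this hwpos.le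
  obtain ⟨N, hN⟩ := polya n' c hc0 hcn hcgt hpos
  refine ⟨h, hhpos, N, fun t => ?_⟩
  by_cases ht : t < b
  · refine Finset.sum_nonneg fun j _ => mul_nonneg (Nat.cast_nonneg _) (hlo _ ?_)
    linarith [hkh j]
  push Not at ht
  set κ := ⌊(t - b) / h⌋₊ with hκ
  have htb : 0 ≤ (t - b) / h := div_nonneg (by linarith) hhpos.le
  have hκ1 : κ * h ≤ t - b := by
    have := Nat.floor_le htb
    rwa [le_div_iff₀ hhpos] at this
  have hκ2 : t - b < (κ + 1) * h := by
    have := Nat.lt_floor_add_one ((t - b) / h)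
    rwa [div_lt_iff₀ hhpos] at this
  have hGc : ∀ j : ℕ, j ≤ κ → c (κ - j) ≤ G (t - j * h) := by
    intro j hj
    have e : ((κ - j : ℕ):ℝ) = κ - j := by rw [Nat.cast_sub hj]
    have h1 : b + ((κ - j : ℕ):ℝ) * h ≤ t - j * h := by rw [e]; linarith
    have h2 : t - j * h ≤ b + (((κ - j : ℕ):ℝ) + 1) * h := by rw [e]; linarith
    simp only [c]
    split_ifs with hk
    · exact hξmin _ _ ⟨h1, h2⟩
    · push Not at hk
      apply hhi
      have : ((n'+1:ℕ):ℝ) ≤ ((κ - j : ℕ):ℝ) := by exact_mod_cast hk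
      have : ((n'+1:ℕ):ℝ) * h ≤ ((κ - j : ℕ):ℝ) * h := by gcongr
      linarith
  have hGneg : ∀ j : ℕ, κ < j → 0 ≤ G (t - j * h) := by
    intro j hj
    apply hlo
    have : ((κ:ℝ) + 1) ≤ j := by exact_mod_cast hj
    have : ((κ:ℝ) + 1) * h ≤ j * h := by gcongr
    linarith
  calc (0:ℝ) ≤ ∑ j ∈ Finset.range (κ+1), (N.choose j : ℝ) * c (κ - j) := hN κ
    _ ≤ ∑ j ∈ Finset.range (κ+1), (N.choose j : ℝ) * G (t - j * h) := by
      refine Finset.sum_le_sum fun j hj => mul_le_mul_of_nonneg_left (hGc j ?_) (Nat.cast_nonneg _)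
      have := Finset.mem_range.1 hj; omega
    _ ≤ ∑ j ∈ Finset.range (max κ N + 1), (N.choose j : ℝ) * G (t - j * h) := by
      refine Finset.sum_le_sum_of_subset_of_nonneg ?_ ?_
      · intro j; simp; omega
      · intro j _ hj
        exact mul_nonneg (Nat.cast_nonneg _) (hGneg j (by simpa using hj))
    _ = _ := by
      symm
      refine Finset.sum_subset ?_ ?_
      · intro j; simp; omega
      · intro j _ hj
        rw [Nat.choose_eq_zero_of_lt (by simpa using hj)]; simp

lemma claimB (G : ℝ → ℝ) (hG : Continuous G) (b b2 a2 a : ℝ) (hb : b < b2) (hba : b2 ≤ a2)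
    (ha : a2 < a) (hlo : ∀ t, t ≤ b2 → 0 ≤ G t) (hhi : ∀ t, a2 ≤ t → 0 ≤ G t)
    (hlo' : ∀ t, b < t → t ≤ b2 → 0 < G t) (hhi' : ∀ t, a2 ≤ t → t < a → 0 < G t)
    (hJ : ∀ L : ℝ, 0 < ∫ t in b..a, G t * Real.exp (L * t)) :
    ∃ h : ℝ, 0 < h ∧ ∃ N : ℕ, ∀ t : ℝ,
      0 ≤ ∑ j ∈ Finset.range (N+1), (N.choose j : ℝ) * G (t - j * h) := by
  have edge_lo : ∀ u, b < u → u ≤ b2 → ∃ γ > 0, ∀ t ∈ Set.Icc u b2, γ ≤ G t := by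
    intro u hu hu2
    obtain ⟨x0, hx0, hmin⟩ := isCompact_Icc.exists_isMinOn (Set.nonempty_Icc.2 hu2)
      hG.continuousOn
    exact ⟨G x0, hlo' _ (by linarith [hx0.1]) hx0.2, fun t ht => hmin ht⟩
  have edge_hi : ∀ u, a2 ≤ u → u < a → ∃ γ > 0, ∀ t ∈ Set.Icc a2 u, γ ≤ G t := by
    intro u hu hu2
    obtain ⟨x0, hx0, hmin⟩ := isCompact_Icc.exists_isMinOn (Set.nonempty_Icc.2 hu)
      hG.continuousOn
    exact ⟨G x0, hhi' _ hx0.1 (by linarith [hx0.2]), fun t ht => hmin ht⟩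
  set bs := (b + b2) / 2 with hbs
  set as := (a2 + a) / 2 with has
  obtain ⟨γ1, hγ1, hγ1'⟩ := edge_lo bs (by linarith) (by linarith)
  obtain ⟨γ2, hγ2, hγ2'⟩ := edge_hi as (by linarith) (by linarith)
  set ω0 := min γ1 γ2 / 2 with hω0
  have hω0pos : 0 < ω0 := by have := lt_min hγ1 hγ2; positivity
  have hω01 : ω0 < γ1 := by have := min_le_left γ1 γ2; linarith
  have hω02 : ω0 < γ2 := by have := min_le_right γ1 γ2; linarith
  have hGc : ∀ ω : ℝ, Continuous fun t => G t - ω := fun ω => by fun_prop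
  obtain ⟨L1, hL1, hT1⟩ := tail_pos (fun t => G t - ω0) (hGc _) bs a2 as (by linarith)
    (by linarith) (fun t ht => by linarith [hγ2' t ht])
  obtain ⟨L2, hL2, hT2⟩ := tail_neg (fun t => G t - ω0) (hGc _) bs b2 as (by linarith)
    (by linarith) (fun t ht => by linarith [hγ1' t ht])
  set L0 := max L1 L2 with hL0
  have hL0pos : 0 < L0 := lt_max_of_lt_left hL1
  -- the compact range
  have hJc : Continuous fun L : ℝ => ∫ t in b..a, G t * Real.exp (L * t) :=
    intervalIntegral.continuous_parametric_intervalIntegral_of_continuous' (by fun_prop) b a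
  obtain ⟨Lm, hLm, hmin⟩ := isCompact_Icc.exists_isMinOn
    (Set.nonempty_Icc.2 (show -L0 ≤ L0 by linarith)) hJc.continuousOn
  have hm := hJ Lm
  set m := ∫ t in b..a, G t * Real.exp (Lm * t) with hmdef
  have hm' : ∀ L ∈ Set.Icc (-L0) L0, m ≤ ∫ t in b..a, G t * Real.exp (L * t) := fun L hL => hmin hL
  obtain ⟨M, hM⟩ := isCompact_Icc.exists_bound_of_continuousOn (s := Set.Icc b a) hG.continuousOn
  have hM0 : 0 ≤ M := (norm_nonneg _).trans (hM b ⟨le_rfl, by linarith⟩)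
  set A := max |b| |a| with hA
  set B := Real.exp (L0 * A) with hB
  have hBpos : 0 < B := Real.exp_pos _
  have hexp : ∀ L ∈ Set.Icc (-L0) L0, ∀ t ∈ Set.Icc b a, Real.exp (L * t) ≤ B := by
    intro L hL t ht
    apply Real.exp_le_exp.2
    have h1 : |L| ≤ L0 := abs_le.2 hL
    have h2 : |t| ≤ A := abs_le_max_abs_abs ht.1 ht.2
    calc L * t ≤ |L * t| := le_abs_self _
      _ = |L| * |t| := abs_mul _ _
      _ ≤ L0 * A := mul_le_mul h1 h2 (abs_nonneg _) hL0pos.le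
  set δ := min (min ((b2 - b)/2) ((a - a2)/2)) (m / (4 * (M * B + 1))) with hδ
  have hδpos : 0 < δ := by
    refine lt_min (lt_min (by linarith) (by linarith)) (by positivity)
  have hδ1 : δ ≤ (b2 - b)/2 := (min_le_left _ _).trans (min_le_left _ _)
  have hδ2 : δ ≤ (a - a2)/2 := (min_le_left _ _).trans (min_le_right _ _)
  have hδ3 : M * B * δ ≤ m / 4 := by
    have h1 : δ ≤ m / (4 * (M * B + 1)) := min_le_right _ _
    rw [le_div_iff₀ (by positivity)] at h1
    nlinarith
  set b1 := b + δ with hb1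
  set a1 := a - δ with ha1
  obtain ⟨γ3, hγ3, hγ3'⟩ := edge_lo b1 (by linarith) (by linarith)
  obtain ⟨γ4, hγ4, hγ4'⟩ := edge_hi a1 (by linarith) (by linarith)
  set ω := min (min ω0 (min γ3 γ4)) (m / (4 * ((a - b) * B))) with hω
  have hab : 0 < a - b := by linarith
  have hωpos : 0 < ω := lt_min (lt_min hω0pos (lt_min hγ3 hγ4)) (by positivity)
  have hωω0 : ω ≤ ω0 := (min_le_left _ _).trans (min_le_left _ _)
  have hωγ3 : ω ≤ γ3 := (min_le_left _ _).trans ((min_le_right _ _).trans (min_le_left _ _))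
  have hωγ4 : ω ≤ γ4 := (min_le_left _ _).trans ((min_le_right _ _).trans (min_le_right _ _))
  have hω3 : ω * B * (a - b) ≤ m / 4 := by
    have h1 : ω ≤ m / (4 * ((a - b) * B)) := min_le_right _ _
    rw [le_div_iff₀ (by positivity)] at h1
    nlinarith
  refine step_lemma G hG b1 b2 a2 a1 (by linarith) hba (by linarith) hlo hhi
    (fun t h1 h2 => hlo' t (by linarith) h2) (fun t h1 h2 => hhi' t h1 (by linarith)) ω hωpos ?_
  intro L
  have hcω : ∀ ω : ℝ, Continuous fun t => (G t - ω) * Real.exp (L * t) := fun ω => by fun_prop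
  have hcG : Continuous fun t => G t * Real.exp (L * t) := by fun_prop
  have hce : Continuous fun t => Real.exp (L * t) := by fun_prop
  by_cases hL : L ∈ Set.Icc (-L0) L0
  · have s1 : (∫ t in b..b1, G t * Real.exp (L * t)) ≤ M * B * δ := by
      have := intervalIntegral.norm_integral_le_of_norm_le_const (a := b) (b := b1)
        (f := fun t => G t * Real.exp (L * t)) (C := M * B) (by
          intro t ht
          rw [Set.uIoc_of_le (by linarith)] at ht
          have htt : t ∈ Set.Icc b a := ⟨ht.1.le, by linarith [ht.2]⟩
          rw [norm_mul, Real.norm_eq_abs (Real.exp _), abs_of_pos (Real.exp_pos _)]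
          exact mul_le_mul (hM t htt) (hexp L hL t htt) (Real.exp_pos _).le hM0)
      rw [show b1 - b = δ by rw [hb1]; ring, abs_of_pos hδpos] at this
      exact (le_abs_self _).trans this
    have s2 : (∫ t in a1..a, G t * Real.exp (L * t)) ≤ M * B * δ := by
      have := intervalIntegral.norm_integral_le_of_norm_le_const (a := a1) (b := a)
        (f := fun t => G t * Real.exp (L * t)) (C := M * B) (by
          intro t ht
          rw [Set.uIoc_of_le (by linarith)] at ht
          have htt : t ∈ Set.Icc b a := ⟨by linarith [ht.1], by linarith [ht.2]⟩
          rw [norm_mul, Real.norm_eq_abs (Real.exp _), abs_of_pos (Real.exp_pos _)]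
          exact mul_le_mul (hM t htt) (hexp L hL t htt) (Real.exp_pos _).le hM0)
      rw [show a - a1 = δ by rw [ha1]; ring, abs_of_pos hδpos] at this
      exact (le_abs_self _).trans this
    have s3 : (∫ t in b1..a1, Real.exp (L * t)) ≤ B * (a - b) := by
      have := intervalIntegral.integral_mono_on (a := b1) (b := a1) (by linarith)
        (hce.intervalIntegrable (μ := MeasureTheory.volume) b1 a1) (g := fun _ => B) (continuous_const.intervalIntegrable _ _) (by
          intro t ht
          exact hexp L hL t ⟨by linarith [ht.1], by linarith [ht.2]⟩)
      simp only [intervalIntegral.integral_const, smul_eq_mul] at this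
      nlinarith
    have s4 := intervalIntegral.integral_add_adjacent_intervals (hcG.intervalIntegrable b b1
      (μ := MeasureTheory.volume)) (hcG.intervalIntegrable b1 a1)
    have s5 := intervalIntegral.integral_add_adjacent_intervals (hcG.intervalIntegrable b a1
      (μ := MeasureTheory.volume)) (hcG.intervalIntegrable a1 a)
    have s6 : (∫ t in b1..a1, (G t - ω) * Real.exp (L * t))
        = (∫ t in b1..a1, G t * Real.exp (L * t)) - ω * ∫ t in b1..a1, Real.exp (L * t) := by
      rw [← intervalIntegral.integral_const_mul, ← intervalIntegral.integral_sub
        (hcG.intervalIntegrable _ _) ((hce.const_mul ω).intervalIntegrable _ _)]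
      refine intervalIntegral.integral_congr fun t _ => ?_
      ring
    have s7 := hm' L hL
    have s8 : ω * (∫ t in b1..a1, Real.exp (L * t)) ≤ m / 4 :=
      (mul_le_mul_of_nonneg_left s3 hωpos.le).trans (by linarith)
    rw [s6]; linarith
  · have key : 0 < ∫ t in bs..as, (G t - ω0) * Real.exp (L * t) := by
      rw [Set.mem_Icc, not_and_or] at hL
      rcases hL with hL | hL
      · exact hT2 L (by have := le_max_right L1 L2; push Not at hL; linarith)
      · exact hT1 L (by have := le_max_left L1 L2; push Not at hL; linarith)
    have k1 : (∫ t in bs..as, (G t - ω0) * Real.exp (L * t))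
        ≤ ∫ t in bs..as, (G t - ω) * Real.exp (L * t) := by
      refine intervalIntegral.integral_mono_on (by linarith) ((hcω _).intervalIntegrable _ _)
        ((hcω _).intervalIntegrable _ _) ?_
      intro t _
      exact mul_le_mul_of_nonneg_right (by linarith) (Real.exp_pos _).le
    have k2 : 0 ≤ ∫ t in b1..bs, (G t - ω) * Real.exp (L * t) := by
      refine intervalIntegral.integral_nonneg (by linarith) fun t ht => ?_
      exact mul_nonneg (by linarith [hγ3' t ⟨ht.1, by linarith [ht.2]⟩]) (Real.exp_pos _).le
    have k3 : 0 ≤ ∫ t in as..a1, (G t - ω) * Real.exp (L * t) := by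
      refine intervalIntegral.integral_nonneg (by linarith) fun t ht => ?_
      exact mul_nonneg (by linarith [hγ4' t ⟨by linarith [ht.1], ht.2⟩]) (Real.exp_pos _).le
    have s4 := intervalIntegral.integral_add_adjacent_intervals ((hcω ω).intervalIntegrable b1 bs
      (μ := MeasureTheory.volume)) ((hcω ω).intervalIntegrable bs as)
    have s5 := intervalIntegral.integral_add_adjacent_intervals ((hcω ω).intervalIntegrable b1 as
      (μ := MeasureTheory.volume)) ((hcω ω).intervalIntegrable as a1)
    linarith

/-- The hockey-stick function. -/
noncomputable def hockey {d : ℕ} (p q : Fin d → ℝ) (t : ℝ) : ℝ :=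
  ∑ i, max (p i - q i * Real.exp t) 0

/-- The power sum. -/
noncomputable def powSum {d : ℕ} (α : ℝ) (p q : Fin d → ℝ) : ℝ :=
  ∑ i, p i ^ α * q i ^ (1 - α)

lemma powSum_pos {d : ℕ} [Nonempty (Fin d)] (α : ℝ) (p q : Fin d → ℝ) (hp : ∀ i, 0 < p i)
    (hq : ∀ i, 0 < q i) : 0 < powSum α p q :=
  Finset.sum_pos (fun i _ => mul_pos (Real.rpow_pos_of_pos (hp i) _)
    (Real.rpow_pos_of_pos (hq i) _)) Finset.univ_nonempty

lemma renyi_iff {d : ℕ} [Nonempty (Fin d)] (α : ℝ) (h0 : α ≠ 0) (h1 : α ≠ 1)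
    (p p' q : Fin d → ℝ) (hp : ∀ i, 0 < p i)
    (hp' : ∀ i, 0 < p' i) (hq : ∀ i, 0 < q i) :
    renyiD α p' q ≤ renyiD α p q ↔
      powSum α p' q / (α * (α - 1)) ≤ powSum α p q / (α * (α - 1)) := by
  have e : ∀ v : Fin d → ℝ, (∀ i, 0 < v i) →
      ∑ i, rpow0 (v i) α * rpow0 (q i) (1 - α) = powSum α v q := by
    intro v hv
    refine Finset.sum_congr rfl fun i _ => ?_
    rw [rpow0, rpow0, if_neg (hv i).ne', if_neg (hq i).ne']
  have S := powSum_pos α p q hp hq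
  have S' := powSum_pos α p' q hp' hq
  unfold renyiD
  rw [if_neg h1, if_neg h1, e p hp, e p' hp']
  rcases lt_or_gt_of_ne h0 with h | h
  · rw [if_pos h, if_pos h, mul_le_mul_iff_right₀ (by apply one_div_pos.2; linarith),
      Real.log_le_log_iff S' S, div_le_div_iff_of_pos_right (by nlinarith)]
  · rw [if_neg (not_lt.2 h.le), if_neg (not_lt.2 h.le)]
    rcases lt_or_gt_of_ne h1 with h2 | h2
    · rw [mul_le_mul_left_of_neg (by apply one_div_neg.2; linarith),
        Real.log_le_log_iff S S', div_le_div_right_of_neg (by nlinarith)]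
    · rw [mul_le_mul_iff_right₀ (by apply one_div_pos.2; linarith),
        Real.log_le_log_iff S' S, div_le_div_iff_of_pos_right (by nlinarith)]

lemma laplace_one (p q b a L : ℝ) (hp : 0 < p) (hq : 0 < q) (hb : q * Real.exp b ≤ p)
    (ha : p ≤ q * Real.exp a) (hL : L ≠ 0) (hL1 : L + 1 ≠ 0) :
    ∫ t in b..a, max (p - q * Real.exp t) 0 * Real.exp (L * t)
      = p ^ (L+1) * q ^ (1 - (L+1)) / ((L+1) * ((L+1) - 1)) - p * (Real.exp (L * b) / L)
        + q * (Real.exp ((L+1) * b) / (L+1)) := by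
  set x := Real.log (p / q) with hx
  have hex : Real.exp x = p / q := Real.exp_log (by positivity)
  have hqx : q * Real.exp x = p := by rw [hex]; field_simp
  have hbx : b ≤ x := by
    rw [← Real.exp_le_exp]
    have : q * Real.exp b ≤ q * Real.exp x := by rw [hqx]; exact hb
    exact le_of_mul_le_mul_left this hq
  have hxa : x ≤ a := by
    rw [← Real.exp_le_exp]
    have : q * Real.exp x ≤ q * Real.exp a := by rw [hqx]; exact ha
    exact le_of_mul_le_mul_left this hq
  have hc : Continuous fun t => max (p - q * Real.exp t) 0 * Real.exp (L * t) := by fun_prop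
  rw [← intervalIntegral.integral_add_adjacent_intervals (hc.intervalIntegrable b x)
    (hc.intervalIntegrable x a)]
  have h1 : ∫ t in x..a, max (p - q * Real.exp t) 0 * Real.exp (L * t) = 0 := by
    have : ∫ t in x..a, max (p - q * Real.exp t) 0 * Real.exp (L * t) = ∫ t in x..a, (0:ℝ) := by
      refine intervalIntegral.integral_congr fun t ht => ?_
      rw [Set.uIcc_of_le hxa] at ht
      have : q * Real.exp x ≤ q * Real.exp t := by gcongr; exact ht.1
      show max (p - q * Real.exp t) 0 * Real.exp (L * t) = 0
      rw [max_eq_right (by linarith), zero_mul]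
    rw [this]; simp
  have h2 : ∫ t in b..x, max (p - q * Real.exp t) 0 * Real.exp (L * t)
      = ∫ t in b..x, (p * Real.exp (L * t) - q * Real.exp ((L+1) * t)) := by
    refine intervalIntegral.integral_congr fun t ht => ?_
    rw [Set.uIcc_of_le hbx] at ht
    have : q * Real.exp t ≤ q * Real.exp x := by gcongr; exact ht.2
    show max (p - q * Real.exp t) 0 * Real.exp (L * t)
      = p * Real.exp (L * t) - q * Real.exp ((L+1) * t)
    rw [max_eq_left (by linarith), show (L+1)*t = L * t + t by ring, Real.exp_add]; ring
  have h3 : ∫ t in b..x, (p * Real.exp (L * t) - q * Real.exp ((L+1) * t))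
      = (p * (Real.exp (L * x) / L) - q * (Real.exp ((L+1) * x) / (L+1)))
        - (p * (Real.exp (L * b) / L) - q * (Real.exp ((L+1) * b) / (L+1))) := by
    refine intervalIntegral.integral_eq_sub_of_hasDerivAt (f := fun t =>
      p * (Real.exp (L * t) / L) - q * (Real.exp ((L+1) * t) / (L+1))) ?_
      (Continuous.intervalIntegrable (by fun_prop) _ _)
    intro t _
    have d1 : ∀ c : ℝ, c ≠ 0 → HasDerivAt (fun t => Real.exp (c * t) / c) (Real.exp (c * t)) t := by
      intro c hc
      have := (((hasDerivAt_id t).const_mul c).exp).div_const c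
      simp only [id, mul_one] at this
      rwa [mul_div_assoc, div_self hc, mul_one] at this
    exact ((d1 L hL).const_mul p).sub ((d1 (L+1) hL1).const_mul q)
  have h4 : p ^ (L+1) * q ^ (1 - (L+1)) = p * Real.exp (L * x) := by
    rw [show 1 - (L+1) = -L by ring, Real.rpow_add hp, Real.rpow_one, Real.rpow_neg hq.le,
      mul_comm L x, hx, ← Real.rpow_def_of_pos (by positivity), Real.div_rpow hp.le hq.le]
    field_simp
  have h5 : q * Real.exp ((L+1) * x) = p * Real.exp (L * x) := by
    rw [show (L+1)*x = L * x + x by ring, Real.exp_add, ← hqx]; ring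
  rw [h1, h2, h3, h4]
  have h6 : q * (Real.exp ((L+1) * x) / (L+1)) = p * Real.exp (L * x) / (L+1) := by
    rw [← h5]; ring
  rw [h6, show L + 1 - 1 = L by ring]
  field_simp
  ring

lemma hockey_cont {d : ℕ} (p q : Fin d → ℝ) : Continuous (hockey p q) := by
  unfold hockey; fun_prop

lemma laplace {d : ℕ} (p q : Fin d → ℝ) (b a L : ℝ) (hp : ∀ i, 0 < p i) (hq : ∀ i, 0 < q i)
    (hps : ∑ i, p i = 1) (hqs : ∑ i, q i = 1)
    (hb : ∀ i, q i * Real.exp b ≤ p i)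
    (ha : ∀ i, p i ≤ q i * Real.exp a) (hL : L ≠ 0) (hL1 : L + 1 ≠ 0) :
    ∫ t in b..a, hockey p q t * Real.exp (L * t)
      = powSum (L+1) p q / ((L+1) * ((L+1) - 1)) - (Real.exp (L * b) / L)
        + (Real.exp ((L+1) * b) / (L+1)) := by
  unfold hockey powSum
  simp_rw [Finset.sum_mul]
  rw [intervalIntegral.integral_finsetSum
    (fun i _ => Continuous.intervalIntegrable (by fun_prop) _ _)]
  simp_rw [fun i => laplace_one (p i) (q i) b a L (hp i) (hq i) (hb i) (ha i) hL hL1]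
  rw [Finset.sum_add_distrib, Finset.sum_sub_distrib, ← Finset.sum_mul, ← Finset.sum_mul, hps, hqs,
    Finset.sum_div]
  ring

lemma laplace_diff_nonneg {d : ℕ} [Nonempty (Fin d)] (p p' q : Fin d → ℝ) (b a : ℝ)
    (hp : ∀ i, 0 < p i) (hp' : ∀ i, 0 < p' i) (hq : ∀ i, 0 < q i)
    (hps : ∑ i, p i = 1) (hps' : ∑ i, p' i = 1) (hqs : ∑ i, q i = 1)
    (hb : ∀ i, q i * Real.exp b ≤ p i) (ha : ∀ i, p i ≤ q i * Real.exp a)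
    (hb' : ∀ i, q i * Real.exp b ≤ p' i) (ha' : ∀ i, p' i ≤ q i * Real.exp a)
    (H : ∀ α : ℝ, renyiD α p' q ≤ renyiD α p q) (L : ℝ) :
    0 ≤ ∫ t in b..a, (hockey p q t - hockey p' q t) * Real.exp (L * t) := by
  have hc := hockey_cont p q
  have hc' := hockey_cont p' q
  have hcont : Continuous fun L : ℝ =>
      ∫ t in b..a, (hockey p q t - hockey p' q t) * Real.exp (L * t) :=
    intervalIntegral.continuous_parametric_intervalIntegral_of_continuous' (by fun_prop) b a
  have hd : Dense ({0, -1}ᶜ : Set ℝ) := (Set.toFinite ({0, -1} : Set ℝ)).countable.dense_compl ℝ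
  have hcl : IsClosed {L : ℝ |
      0 ≤ ∫ t in b..a, (hockey p q t - hockey p' q t) * Real.exp (L * t)} :=
    isClosed_le continuous_const hcont
  have hsub : ({0, -1}ᶜ : Set ℝ) ⊆ {L : ℝ |
      0 ≤ ∫ t in b..a, (hockey p q t - hockey p' q t) * Real.exp (L * t)} := by
    intro L hL
    simp only [Set.mem_compl_iff, Set.mem_insert_iff, Set.mem_singleton_iff, not_or] at hL
    have hL1 : L + 1 ≠ 0 := fun h => hL.2 (by linarith)
    have h1 := (renyi_iff (L+1) hL1 (by simpa using hL.1) p p' q hp hp' hq).1 (H _)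
    have e : (∫ t in b..a, (hockey p q t - hockey p' q t) * Real.exp (L * t))
        = (∫ t in b..a, hockey p q t * Real.exp (L * t))
          - ∫ t in b..a, hockey p' q t * Real.exp (L * t) := by
      rw [← intervalIntegral.integral_sub (Continuous.intervalIntegrable (by fun_prop) _ _)
        (Continuous.intervalIntegrable (by fun_prop) _ _)]
      refine intervalIntegral.integral_congr fun t _ => ?_
      ring
    rw [Set.mem_setOf_eq]
    rw [e, laplace p q b a L hp hq hps hqs hb ha hL.1 hL1,
      laplace p' q b a L hp' hq hps' hqs hb' ha' hL.1 hL1]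
    linarith
  exact (hcl.closure_subset_iff.2 hsub) (hd L)

lemma edge_hi {d : ℕ} [Nonempty (Fin d)] (p p' q : Fin d → ℝ) (a : ℝ)
    (hp : ∀ i, 0 < p i) (hp' : ∀ i, 0 < p' i) (hq : ∀ i, 0 < q i) (hqs : ∑ i, q i = 1)
    (ha : ∀ i, p i ≤ q i * Real.exp a)
    (H : ∀ α : ℝ, renyiD α p' q ≤ renyiD α p q) (i : Fin d) : p' i ≤ q i * Real.exp a := by
  by_contra hcon
  push Not at hcon
  set y := Real.log (p' i / q i) - a with hy
  have hypos : 0 < y := by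
    have : Real.exp a < p' i / q i := by rw [lt_div_iff₀ (hq i)]; linarith
    have := (Real.lt_log_iff_exp_lt (div_pos (hp' i) (hq i))).2 this
    linarith
  obtain ⟨α, hα⟩ := exists_gt (max 1 (-Real.log (q i) / y))
  have hα1 : 1 < α := (le_max_left _ _).trans_lt hα
  have hα2 : -Real.log (q i) < α * y := by
    have := (le_max_right _ _).trans_lt hα
    rwa [div_lt_iff₀ hypos] at this
  have h1 := (renyi_iff α (by linarith) (by linarith) p p' q hp hp' hq).1 (H _)
  rw [div_le_div_iff_of_pos_right (by nlinarith)] at h1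
  have term : ∀ v : Fin d → ℝ, (∀ i, 0 < v i) → ∀ j, v j ^ α * q j ^ (1 - α)
      = q j * (v j / q j) ^ α := by
    intro v hv j
    rw [Real.rpow_sub (hq j), Real.rpow_one, Real.div_rpow (hv j).le (hq j).le]; ring
  have h2 : powSum α p q ≤ Real.exp (α * a) := by
    unfold powSum
    calc _ ≤ ∑ j, q j * Real.exp (α * a) := by
          refine Finset.sum_le_sum fun j _ => ?_
          rw [term p hp j]
          refine mul_le_mul_of_nonneg_left ?_ (hq j).le
          rw [mul_comm α a, Real.exp_mul]
          refine Real.rpow_le_rpow (div_pos (hp j) (hq j)).le ?_ (by linarith)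
          rw [div_le_iff₀ (hq j)]; linarith [ha j]
      _ = _ := by rw [← Finset.sum_mul, hqs, one_mul]
  have h3 : q i * (p' i / q i) ^ α ≤ powSum α p' q := by
    rw [← term p' hp' i]
    exact Finset.single_le_sum (f := fun j => p' j ^ α * q j ^ (1 - α))
      (fun j _ => mul_nonneg (Real.rpow_nonneg (hp' j).le _) (Real.rpow_nonneg (hq j).le _))
      (Finset.mem_univ i)
  have h4 := h3.trans (h1.trans h2)
  have h5 := Real.log_le_log (mul_pos (hq i) (Real.rpow_pos_of_pos (div_pos (hp' i) (hq i)) _)) h4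
  rw [Real.log_mul (hq i).ne' (Real.rpow_pos_of_pos (div_pos (hp' i) (hq i)) _).ne',
    Real.log_rpow (div_pos (hp' i) (hq i)), Real.log_exp] at h5
  rw [hy] at hα2
  nlinarith

lemma edge_lo {d : ℕ} [Nonempty (Fin d)] (p p' q : Fin d → ℝ) (b : ℝ)
    (hp : ∀ i, 0 < p i) (hp' : ∀ i, 0 < p' i) (hq : ∀ i, 0 < q i) (hqs : ∑ i, q i = 1)
    (hb : ∀ i, q i * Real.exp b ≤ p i)
    (H : ∀ α : ℝ, renyiD α p' q ≤ renyiD α p q) (i : Fin d) : q i * Real.exp b ≤ p' i := by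
  by_contra hcon
  push Not at hcon
  set y := b - Real.log (p' i / q i) with hy
  have hypos : 0 < y := by
    have : p' i / q i < Real.exp b := by rw [div_lt_iff₀ (hq i)]; linarith
    have := (Real.log_lt_iff_lt_exp (div_pos (hp' i) (hq i))).2 this
    linarith
  obtain ⟨α', hα⟩ := exists_gt (max 1 (-Real.log (q i) / y))
  have hα1 : 1 < α' := (le_max_left _ _).trans_lt hα
  have hα2 : -Real.log (q i) < α' * y := by
    have := (le_max_right _ _).trans_lt hα
    rwa [div_lt_iff₀ hypos] at this
  obtain ⟨α, rfl⟩ : ∃ α, α' = -α := ⟨-α', by ring⟩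
  have h1 := (renyi_iff α (by linarith) (by linarith) p p' q hp hp' hq).1 (H _)
  rw [div_le_div_iff_of_pos_right (by nlinarith)] at h1
  have term : ∀ v : Fin d → ℝ, (∀ i, 0 < v i) → ∀ j, v j ^ α * q j ^ (1 - α)
      = q j * (v j / q j) ^ α := by
    intro v hv j
    rw [Real.rpow_sub (hq j), Real.rpow_one, Real.div_rpow (hv j).le (hq j).le]; ring
  have h2 : powSum α p q ≤ Real.exp (α * b) := by
    unfold powSum
    calc _ ≤ ∑ j, q j * Real.exp (α * b) := by
          refine Finset.sum_le_sum fun j _ => ?_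
          rw [term p hp j]
          refine mul_le_mul_of_nonneg_left ?_ (hq j).le
          rw [mul_comm α b, Real.exp_mul]
          refine Real.rpow_le_rpow_of_nonpos (Real.exp_pos _) ?_ (by linarith)
          rw [le_div_iff₀ (hq j)]; linarith [hb j]
      _ = _ := by rw [← Finset.sum_mul, hqs, one_mul]
  have h3 : q i * (p' i / q i) ^ α ≤ powSum α p' q := by
    rw [← term p' hp' i]
    exact Finset.single_le_sum (f := fun j => p' j ^ α * q j ^ (1 - α))
      (fun j _ => mul_nonneg (Real.rpow_nonneg (hp' j).le _) (Real.rpow_nonneg (hq j).le _))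
      (Finset.mem_univ i)
  have h4 := h3.trans (h1.trans h2)
  have h5 := Real.log_le_log (mul_pos (hq i) (Real.rpow_pos_of_pos (div_pos (hp' i) (hq i)) _)) h4
  rw [Real.log_mul (hq i).ne' (Real.rpow_pos_of_pos (div_pos (hp' i) (hq i)) _).ne',
    Real.log_rpow (div_pos (hp' i) (hq i)), Real.log_exp] at h5
  rw [hy] at hα2
  nlinarith

lemma dpi {X : Type*} [Fintype X] [DecidableEq X] (P P' Q : X → ℝ) (hQ : ∀ x, 0 < Q x)
    (hP : ∀ x, 0 ≤ P x) (hP' : ∀ x, 0 ≤ P' x) (hsupp : ∀ x, P x = 0 → P' x = 0)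
    (Λ : Matrix X X ℝ) (hΛ : ColStochastic Λ) (hΛQ : Λ.mulVec Q = Q) (hΛP : Λ.mulVec P = P')
    (f : ℝ → ℝ) (hf : ConvexOn ℝ (Set.Ioi 0) f) :
    ∑ x ∈ Finset.univ.filter (fun x => P x ≠ 0), Q x * f (P' x / Q x)
      ≤ ∑ x ∈ Finset.univ.filter (fun x => P x ≠ 0), Q x * f (P x / Q x) := by
  obtain ⟨hΛ0, hΛ1⟩ := hΛ
  set S := Finset.univ.filter (fun x => P x ≠ 0) with hS
  have hmem : ∀ x, x ∈ S ↔ P x ≠ 0 := fun x => by simp [hS]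
  have hPpos : ∀ x ∈ S, 0 < P x := fun x hx => lt_of_le_of_ne (hP x) (Ne.symm ((hmem x).1 hx))
  have hQe : ∀ y, ∑ x, Λ y x * Q x = Q y := fun y => congrFun hΛQ y
  have hPe : ∀ y, ∑ x, Λ y x * P x = P' y := fun y => congrFun hΛP y
  have h1 : ∀ x ∈ S, ∀ y ∉ S, Λ y x = 0 := by
    intro x hx y hy
    have hy0 : P y = 0 := by by_contra h; exact hy ((hmem y).2 h)
    have := hPe y
    rw [hsupp y hy0, Finset.sum_eq_zero_iff_of_nonneg
      (fun x _ => mul_nonneg (hΛ0 y x) (hP x))] at this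
    have := this x (Finset.mem_univ x)
    exact (mul_eq_zero.1 this).resolve_right (hPpos x hx).ne'
  have hcol : ∀ x ∈ S, ∑ y ∈ S, Λ y x = 1 := by
    intro x hx
    rw [← hΛ1 x]
    exact Finset.sum_subset (Finset.subset_univ _) (fun y _ hy => h1 x hx y hy)
  have h2 : ∀ x ∉ S, ∀ y ∈ S, Λ y x = 0 := by
    have e1 : ∑ y ∈ S, Q y = ∑ x, Q x * ∑ y ∈ S, Λ y x := by
      calc ∑ y ∈ S, Q y = ∑ y ∈ S, ∑ x, Λ y x * Q x := Finset.sum_congr rfl fun y _ => (hQe y).symm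
        _ = ∑ x, ∑ y ∈ S, Λ y x * Q x := Finset.sum_comm
        _ = _ := by
          refine Finset.sum_congr rfl fun x _ => ?_
          rw [← Finset.sum_mul, mul_comm]
    rw [← Finset.sum_add_sum_compl S] at e1
    have e2 : ∑ x ∈ S, Q x * ∑ y ∈ S, Λ y x = ∑ x ∈ S, Q x :=
      Finset.sum_congr rfl fun x hx => by rw [hcol x hx, mul_one]
    have e3 : ∑ x ∈ Sᶜ, Q x * ∑ y ∈ S, Λ y x = 0 := by linarith
    rw [Finset.sum_eq_zero_iff_of_nonneg
      (fun x _ => mul_nonneg (hQ x).le (Finset.sum_nonneg fun y _ => hΛ0 y x))] at e3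
    intro x hx y hy
    have := (mul_eq_zero.1 (e3 x (Finset.mem_compl.2 hx))).resolve_left (hQ x).ne'
    rw [Finset.sum_eq_zero_iff_of_nonneg (fun y _ => hΛ0 y x)] at this
    exact this y hy
  have hQS : ∀ y ∈ S, ∑ x ∈ S, Λ y x * Q x = Q y := by
    intro y hy
    rw [← hQe y]
    exact Finset.sum_subset (Finset.subset_univ _) (fun x _ hx => by rw [h2 x hx y hy, zero_mul])
  have hPS : ∀ y ∈ S, ∑ x ∈ S, Λ y x * P x = P' y := by
    intro y hy
    rw [← hPe y]
    exact Finset.sum_subset (Finset.subset_univ _) (fun x _ hx => by rw [h2 x hx y hy, zero_mul])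
  have hJ : ∀ y ∈ S, Q y * f (P' y / Q y) ≤ ∑ x ∈ S, Λ y x * (Q x * f (P x / Q x)) := by
    intro y hy
    have hQy := hQ y
    have j := hf.map_sum_le (t := S) (w := fun x => Λ y x * Q x / Q y) (p := fun x => P x / Q x)
      (fun x _ => div_nonneg (mul_nonneg (hΛ0 y x) (hQ x).le) hQy.le)
      (by rw [← Finset.sum_div, hQS y hy, div_self hQy.ne'])
      (fun x hx => div_pos (hPpos x hx) (hQ x))
    simp only [smul_eq_mul] at j
    have e1 : ∑ x ∈ S, Λ y x * Q x / Q y * (P x / Q x) = P' y / Q y := by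
      rw [← hPS y hy, Finset.sum_div]
      refine Finset.sum_congr rfl fun x _ => ?_
      have := (hQ x).ne'
      field_simp
    rw [e1] at j
    have := mul_le_mul_of_nonneg_left j hQy.le
    refine this.trans (le_of_eq ?_)
    rw [Finset.mul_sum]
    refine Finset.sum_congr rfl fun x _ => ?_
    field_simp
  refine (Finset.sum_le_sum hJ).trans (le_of_eq ?_)
  rw [Finset.sum_comm]
  refine Finset.sum_congr rfl fun x hx => ?_
  rw [← Finset.sum_mul, hcol x hx, one_mul]

lemma dpi_tensor {d m : ℕ} (p p'' q : Fin d → ℝ) (r s : Fin m → ℝ)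
    (hp : ∀ i, 0 < p i) (hp'' : ∀ i, 0 < p'' i) (hq : ∀ i, 0 < q i) (hr : ∀ j, 0 ≤ r j)
    (hs : ∀ j, 0 < s j)
    (Λ : Matrix (Fin d × Fin m) (Fin d × Fin m) ℝ) (hΛ : ColStochastic Λ)
    (hΛQ : Λ.mulVec (tensorVec q s) = tensorVec q s)
    (hΛP : Λ.mulVec (tensorVec p r) = tensorVec p'' r)
    (f : ℝ → ℝ) (hf : ConvexOn ℝ (Set.Ioi 0) f) :
    ∑ i, ∑ j ∈ Finset.univ.filter (fun j => r j ≠ 0), (q i * s j) * f (p'' i * r j / (q i * s j))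
    ≤ ∑ i, ∑ j ∈ Finset.univ.filter (fun j => r j ≠ 0), (q i * s j) * f (p i * r j / (q i * s j)) := by
  have h := dpi (tensorVec p r) (tensorVec p'' r) (tensorVec q s)
    (fun x => mul_pos (hq _) (hs _)) (fun x => mul_nonneg (hp _).le (hr _))
    (fun x => mul_nonneg (hp'' _).le (hr _))
    (fun x hx => by
      have := (mul_eq_zero.1 hx).resolve_left (hp _).ne'
      simp [tensorVec, this]) Λ hΛ hΛQ hΛP f hf
  have e : Finset.univ.filter (fun x => tensorVec p r x ≠ 0)
      = (Finset.univ : Finset (Fin d)) ×ˢ Finset.univ.filter (fun j => r j ≠ 0) := by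
    ext x
    simp [tensorVec, (hp x.1).ne']
  rw [e, Finset.sum_product, Finset.sum_product] at h
  exact h

/-- The catalytic condition. -/
def CatCond {d : ℕ} (p p' q : Fin d → ℝ) : Prop :=
  ∀ ε : ℝ, 0 < ε →
        ∃ (m : ℕ) (r s : Fin m → ℝ),
          IsProbVec r ∧ IsProbVec s ∧ (∀ j, 0 < s j) ∧
          ∃ Λ : Matrix (Fin d × Fin m) (Fin d × Fin m) ℝ,
            ColStochastic Λ ∧
            Λ.mulVec (tensorVec q s) = tensorVec q s ∧
            ∃ p'' : Fin d → ℝ, IsProbVec p'' ∧ traceDist p'' p' ≤ ε ∧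
              Λ.mulVec (tensorVec p r) = tensorVec p'' r

lemma back_limit {d : ℕ} (p p' q : Fin d → ℝ) (hp' : ∀ i, 0 < p' i) (hq : ∀ i, 0 < q i)
    (hC : CatCond p p' q) (f : ℝ → ℝ) (hfc : ∀ x, 0 < x → ContinuousAt f x)
    (hstep : ∀ (m : ℕ) (r s : Fin m → ℝ) (Λ : Matrix (Fin d × Fin m) (Fin d × Fin m) ℝ)
      (p'' : Fin d → ℝ), IsProbVec r → IsProbVec s → (∀ j, 0 < s j) → ColStochastic Λ →
      Λ.mulVec (tensorVec q s) = tensorVec q s → IsProbVec p'' → (∀ i, 0 < p'' i) →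
      Λ.mulVec (tensorVec p r) = tensorVec p'' r →
      ∑ i, q i * f (p'' i / q i) ≤ ∑ i, q i * f (p i / q i)) :
    ∑ i, q i * f (p' i / q i) ≤ ∑ i, q i * f (p i / q i) := by
  by_contra hcon
  push Not at hcon
  have hcont : ContinuousAt (fun v : Fin d → ℝ => ∑ i, q i * f (v i / q i)) p' := by
    refine tendsto_finsetSum _ fun i _ => ?_
    refine Tendsto.const_mul _ ?_
    have h1 : ContinuousAt f (p' i / q i) := hfc _ (div_pos (hp' i) (hq i))
    exact h1.tendsto.comp ((by fun_prop : Continuous fun v : Fin d → ℝ => v i / q i).tendsto p')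
  have ev1 : ∀ᶠ v in 𝓝 p', ∑ i, q i * f (p i / q i) < ∑ i, q i * f (v i / q i) :=
    hcont.eventually (lt_mem_nhds hcon)
  have ev2 : ∀ᶠ v in 𝓝 p', ∀ i, 0 < v i := by
    rw [eventually_all]
    intro i
    exact ((continuous_apply i).tendsto p').eventually (lt_mem_nhds (hp' i))
  obtain ⟨δ, hδ, hball⟩ := Metric.eventually_nhds_iff.1 (ev1.and ev2)
  obtain ⟨m, r, s, hr, hs, hspos, Λ, hΛ, hΛQ, p'', hp'', htd, hΛP⟩ := hC (δ / 4) (by positivity)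
  have hd : dist p'' p' < δ := by
    rw [dist_pi_lt_iff hδ]
    intro i
    rw [Real.dist_eq]
    have h1 : |p'' i - p' i| ≤ ∑ i, |p'' i - p' i| :=
      Finset.single_le_sum (f := fun i => |p'' i - p' i|) (fun _ _ => abs_nonneg _)
        (Finset.mem_univ i)
    unfold traceDist at htd
    linarith
  obtain ⟨h1, h2⟩ := hball hd
  exact absurd (hstep m r s Λ p'' hr hs hspos hΛ hΛQ hp'' h2 hΛP) (not_le.2 h1)

lemma convexOn_pow_div (α : ℝ) (h0 : α ≠ 0) (h1 : α ≠ 1) :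
    ConvexOn ℝ (Set.Ioi 0) (fun x : ℝ => x ^ α * (1 / (α * (α - 1)))) := by
  rcases lt_or_gt_of_ne h0 with h | h
  · have hx : ConvexOn ℝ (Set.Ioi (0:ℝ)) (fun x : ℝ => x ^ α) := by
      refine ⟨convex_Ioi 0, fun x hx y hy a b ha hb hab => ?_⟩
      have hx' : 0 < x := hx
      have hy' : 0 < y := hy
      have hz : 0 < a * x + b * y := (convex_Ioi (0:ℝ)) hx hy ha hb hab
      have hl := strictConcaveOn_log_Ioi.concaveOn.2 hx hy ha hb hab
      have he := convexOn_exp.2 (Set.mem_univ (Real.log x * α)) (Set.mem_univ (Real.log y * α))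
        ha hb hab
      simp only [smul_eq_mul] at hl he ⊢
      rw [Real.rpow_def_of_pos hz, Real.rpow_def_of_pos hx', Real.rpow_def_of_pos hy']
      refine le_trans (Real.exp_le_exp.2 ?_) he
      nlinarith
    have := hx.smul (c := 1 / (α * (α - 1))) (by apply one_div_nonneg.2; nlinarith)
    refine this.congr fun x _ => ?_
    simp [mul_comm]
  · rcases lt_or_gt_of_ne h1 with h2 | h2
    · have hx : ConcaveOn ℝ (Set.Ioi (0:ℝ)) (fun x : ℝ => x ^ α) :=
        (Real.concaveOn_rpow h.le h2.le).subset Set.Ioi_subset_Ici_self (convex_Ioi 0)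
      have := hx.neg.smul (c := -(1 / (α * (α - 1))))
        (by rw [neg_nonneg]; apply one_div_nonpos.2; nlinarith)
      refine this.congr fun x _ => ?_
      simp [mul_comm]
    · have hx : ConvexOn ℝ (Set.Ioi (0:ℝ)) (fun x : ℝ => x ^ α) :=
        (convexOn_rpow h2.le).subset Set.Ioi_subset_Ici_self (convex_Ioi 0)
      have := hx.smul (c := 1 / (α * (α - 1))) (by apply one_div_nonneg.2; nlinarith)
      refine this.congr fun x _ => ?_
      simp [mul_comm]

lemma backward {d : ℕ} [Nonempty (Fin d)] (p p' q : Fin d → ℝ) (hp : IsProbVec p)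
    (hppos : ∀ i, 0 < p i) (hp' : ∀ i, 0 < p' i) (hq : ∀ i, 0 < q i)
    (hqs : ∑ i, q i = 1) (hC : CatCond p p' q) (α : ℝ) : renyiD α p' q ≤ renyiD α p q := by
  by_cases h1 : α = 1
  · subst h1
    have key := back_limit p p' q hp' hq hC (fun x => x * Real.log x)
      (fun x hx => continuousAt_id.mul (Real.continuousAt_log hx.ne')) (by
      intro m r s Λ p'' hr hs hspos hΛ hΛQ hp'' hp''pos hΛP
      have h := dpi_tensor p p'' q r s hppos hp''pos hq hr.1 hspos Λ hΛ hΛQ hΛP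
        (fun x => x * Real.log x)
        (Real.convexOn_mul_log.subset Set.Ioi_subset_Ici_self (convex_Ioi 0))
      have hrS : ∑ j ∈ Finset.univ.filter (fun j => r j ≠ 0), r j = 1 := by
        rw [← hr.2]; exact Finset.sum_filter_ne_zero _
      have e : ∀ v : Fin d → ℝ, (∀ i, 0 < v i) → ∑ i, v i = 1 →
          ∑ i, ∑ j ∈ Finset.univ.filter (fun j => r j ≠ 0),
            (q i * s j) * (v i * r j / (q i * s j) * Real.log (v i * r j / (q i * s j)))
          = ∑ i, q i * (v i / q i * Real.log (v i / q i))
            + ∑ j ∈ Finset.univ.filter (fun j => r j ≠ 0), r j * Real.log (r j / s j) := by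
        intro v hv hvs
        have e1 : ∀ i, ∑ j ∈ Finset.univ.filter (fun j => r j ≠ 0),
            (q i * s j) * (v i * r j / (q i * s j) * Real.log (v i * r j / (q i * s j)))
            = q i * (v i / q i * Real.log (v i / q i))
            + v i * ∑ j ∈ Finset.univ.filter (fun j => r j ≠ 0), r j * Real.log (r j / s j) := by
          intro i
          have hq0 := (hq i).ne'
          have e2 : q i * (v i / q i * Real.log (v i / q i))
              = (∑ j ∈ Finset.univ.filter (fun j => r j ≠ 0), r j)
                * (v i * Real.log (v i / q i)) := by
            rw [hrS]; field_simp
          rw [e2, Finset.sum_mul, Finset.mul_sum, ← Finset.sum_add_distrib]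
          refine Finset.sum_congr rfl fun j hj => ?_
          have hr0 : r j ≠ 0 := by simpa using hj
          have hs0 := (hspos j).ne'
          rw [show v i * r j / (q i * s j) = (v i / q i) * (r j / s j) by field_simp,
            Real.log_mul (div_pos (hv i) (hq i)).ne' (div_ne_zero hr0 hs0)]
          field_simp
        simp_rw [e1]
        rw [Finset.sum_add_distrib, ← Finset.sum_mul, hvs, one_mul]
      rw [e p'' hp''pos hp''.2, e p hppos hp.2] at h
      linarith)
    have e : ∀ v : Fin d → ℝ, renyiD 1 v q = ∑ i, q i * (v i / q i * Real.log (v i / q i)) := by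
      intro v
      unfold renyiD
      rw [if_pos rfl]
      refine Finset.sum_congr rfl fun i _ => ?_
      have := (hq i).ne'
      field_simp
    rw [e, e]; exact key
  by_cases h0 : α = 0
  · subst h0
    have e : ∀ v : Fin d → ℝ, (∀ i, 0 < v i) → renyiD 0 v q = 0 := by
      intro v hv
      have e1 : ∀ i, rpow0 (v i) 0 * rpow0 (q i) (1 - 0) = q i := by
        intro i
        rw [rpow0, rpow0, if_neg (hv i).ne', if_neg (hq i).ne']; simp
      unfold renyiD
      simp_rw [e1]
      rw [hqs]; simp
    rw [e _ hppos, e _ hp']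
  rw [renyi_iff α h0 h1 p p' q hppos hp' hq]
  have key := back_limit p p' q hp' hq hC (fun x => x ^ α * (1 / (α * (α - 1))))
    (fun x hx => (Real.continuousAt_rpow_const x α (Or.inl hx.ne')).mul_const _) (by
    intro m r s Λ p'' hr hs hspos hΛ hΛQ hp'' hp''pos hΛP
    have h := dpi_tensor p p'' q r s hppos hp''pos hq hr.1 hspos Λ hΛ hΛQ hΛP
      _ (convexOn_pow_div α h0 h1)
    set R := ∑ j ∈ Finset.univ.filter (fun j => r j ≠ 0), s j * (r j / s j) ^ α with hR
    have hrpos : ∀ j ∈ Finset.univ.filter (fun j => r j ≠ 0), 0 < r j := fun j hj =>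
      lt_of_le_of_ne (hr.1 j) (Ne.symm (by simpa using hj))
    have hRpos : 0 < R := by
      refine Finset.sum_pos (fun j hj => mul_pos (hspos j) (Real.rpow_pos_of_pos
        (div_pos (hrpos j hj) (hspos j)) _)) ?_
      by_contra hne
      rw [Finset.not_nonempty_iff_eq_empty] at hne
      have hrS : ∑ j ∈ Finset.univ.filter (fun j => r j ≠ 0), r j = 1 := by
        rw [← hr.2]; exact Finset.sum_filter_ne_zero _
      rw [hne] at hrS
      simp at hrS
    have e : ∀ v : Fin d → ℝ, (∀ i, 0 < v i) →
        ∑ i, ∑ j ∈ Finset.univ.filter (fun j => r j ≠ 0),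
          (q i * s j) * ((v i * r j / (q i * s j)) ^ α * (1 / (α * (α - 1))))
        = (∑ i, q i * ((v i / q i) ^ α * (1 / (α * (α - 1))))) * R := by
      intro v hv
      rw [hR, Finset.sum_mul]
      refine Finset.sum_congr rfl fun i _ => ?_
      rw [Finset.mul_sum]
      refine Finset.sum_congr rfl fun j hj => ?_
      rw [show v i * r j / (q i * s j) = (v i / q i) * (r j / s j) by
        have := (hq i).ne'
        have := (hspos j).ne'
        field_simp, Real.mul_rpow (div_pos (hv i) (hq i)).le (div_pos (hrpos j hj) (hspos j)).le]
      ring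
    rw [e p'' hp''pos, e p hppos] at h
    exact le_of_mul_le_mul_right h hRpos)
  have e : ∀ v : Fin d → ℝ, (∀ i, 0 < v i) → powSum α v q / (α * (α - 1))
      = ∑ i, q i * ((v i / q i) ^ α * (1 / (α * (α - 1)))) := by
    intro v hv
    rw [powSum, Finset.sum_div]
    refine Finset.sum_congr rfl fun i _ => ?_
    rw [Real.rpow_sub (hq i), Real.rpow_one, Real.div_rpow (hv i).le (hq i).le]; ring
  rw [e _ hppos, e _ hp']
  exact key

lemma hockey_nonneg {d : ℕ} (p q : Fin d → ℝ) (t : ℝ) : 0 ≤ hockey p q t :=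
  Finset.sum_nonneg fun _ _ => le_max_right _ _

lemma hockey_lin {d : ℕ} (p q : Fin d → ℝ) (hps : ∑ i, p i = 1) (hqs : ∑ i, q i = 1) (t : ℝ) :
    ∑ i, (p i - q i * Real.exp t) = 1 - Real.exp t := by
  rw [Finset.sum_sub_distrib, ← Finset.sum_mul, hps, hqs, one_mul]

lemma hockey_ge {d : ℕ} (p q : Fin d → ℝ) (hps : ∑ i, p i = 1) (hqs : ∑ i, q i = 1) (t : ℝ) :
    1 - Real.exp t ≤ hockey p q t := by
  rw [← hockey_lin p q hps hqs t]
  exact Finset.sum_le_sum fun _ _ => le_max_left _ _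

lemma hockey_self_le {d : ℕ} (p q : Fin d → ℝ) (hq : ∀ i, 0 < q i)
    (hps : ∑ i, p i = 1) (hqs : ∑ i, q i = 1) (t : ℝ) :
    hockey q q t ≤ hockey p q t := by
  have e : hockey q q t = max (1 - Real.exp t) 0 := by
    unfold hockey
    have : ∀ i, max (q i - q i * Real.exp t) 0 = q i * max (1 - Real.exp t) 0 := by
      intro i
      rw [mul_max_of_nonneg _ _ (hq i).le]
      ring_nf
    simp_rw [this]
    rw [← Finset.sum_mul, hqs, one_mul]
  rw [e]
  exact max_le (hockey_ge p q hps hqs t) (hockey_nonneg _ _ _)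

lemma hockey_mix {d : ℕ} (p q : Fin d → ℝ) (e : ℝ) (he : 0 ≤ e) (he1 : e ≤ 1) (t : ℝ) :
    hockey (fun i => (1 - e) * p i + e * q i) q t ≤ (1 - e) * hockey p q t + e * hockey q q t := by
  unfold hockey
  rw [Finset.mul_sum, Finset.mul_sum, ← Finset.sum_add_distrib]
  refine Finset.sum_le_sum fun i _ => ?_
  have h1 := le_max_left (p i - q i * Real.exp t) 0
  have h2 := le_max_right (p i - q i * Real.exp t) 0
  have h3 := le_max_left (q i - q i * Real.exp t) 0
  have h4 := le_max_right (q i - q i * Real.exp t) 0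
  have he' : 0 ≤ 1 - e := by linarith
  apply max_le
  · have := mul_le_mul_of_nonneg_left h1 he'
    have := mul_le_mul_of_nonneg_left h3 he
    nlinarith
  · positivity

lemma exists_gt_of_ne {d : ℕ} (p q : Fin d → ℝ) (hps : ∑ i, p i = 1) (hqs : ∑ i, q i = 1)
    (hne : p ≠ q) : ∃ i, q i < p i := by
  by_contra hcon
  push Not at hcon
  apply hne
  have := (Finset.sum_eq_sum_iff_of_le (s := Finset.univ) (fun i _ => hcon i)).1 (by rw [hps, hqs])
  funext i
  exact this i (Finset.mem_univ _)

/-- Turning a binomial certificate into a catalytic transformation. -/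
lemma build_cat {d : ℕ} [Nonempty (Fin d)] (p p' q : Fin d → ℝ)
    (hps : ∑ i, p i = 1) (hps' : ∑ i, p' i = 1) (hp : ∀ i, 0 ≤ p i) (hp' : ∀ i, 0 ≤ p' i)
    (hq : ∀ i, 0 < q i)
    (h : ℝ) (N : ℕ)
    (hN : ∀ t : ℝ, 0 ≤ ∑ j ∈ Finset.range (N+1),
      (N.choose j : ℝ) * (hockey p q (t - j * h) - hockey p' q (t - j * h))) :
    ∃ (m : ℕ) (r s : Fin m → ℝ),
          IsProbVec r ∧ IsProbVec s ∧ (∀ j, 0 < s j) ∧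
          ∃ Λ : Matrix (Fin d × Fin m) (Fin d × Fin m) ℝ,
            ColStochastic Λ ∧
            Λ.mulVec (tensorVec q s) = tensorVec q s ∧
              Λ.mulVec (tensorVec p r) = tensorVec p' r := by
  set r : Fin (N+1) → ℝ := fun j => (N.choose j : ℝ) / 2 ^ N with hr
  have hrpos : ∀ j, 0 < r j := by
    intro j
    have : 0 < N.choose j := Nat.choose_pos (by omega)
    have : (0:ℝ) < N.choose j := by exact_mod_cast this
    simp only [hr]; positivity
  have hrs : ∑ j, r j = 1 := by
    simp only [hr]
    rw [← Finset.sum_div, Fin.sum_univ_eq_sum_range (fun j => (N.choose j : ℝ))]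
    rw [div_eq_one_iff_eq (by positivity)]
    exact_mod_cast Nat.sum_range_choose N
  set c : ℝ := ∑ j, r j * Real.exp (-((j : ℕ) : ℝ) * h) with hc
  have hcpos : 0 < c := Finset.sum_pos (fun j _ => mul_pos (hrpos j) (Real.exp_pos _)) ⟨0, Finset.mem_univ _⟩
  set s : Fin (N+1) → ℝ := fun j => r j * Real.exp (-((j : ℕ) : ℝ) * h) / c with hs
  have hspos : ∀ j, 0 < s j := fun j => div_pos (mul_pos (hrpos j) (Real.exp_pos _)) hcpos
  have hss : ∑ j, s j = 1 := by
    simp only [hs]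
    rw [← Finset.sum_div, ← hc, div_self hcpos.ne']
  have htens : ∀ v : Fin d → ℝ, ∑ i, v i = 1 → ∑ x, tensorVec v r x = 1 := by
    intro v hv
    rw [Fintype.sum_prod_type]
    simp only [tensorVec, ← Finset.mul_sum, hrs, hv, mul_one]
  have hsum : ∑ x, tensorVec p r x = ∑ x, tensorVec p' r x := by
    rw [htens p hps, htens p' hps']
  have key : ∀ (v : Fin d → ℝ) (τ : ℝ), 0 < τ →
      ∑ x, max (tensorVec v r x - τ * tensorVec q s x) 0
        = ∑ j ∈ Finset.range (N+1), ((N.choose j : ℝ) / 2 ^ N) *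
            hockey v q (Real.log τ - Real.log c - j * h) := by
    intro v τ hτ
    rw [Fintype.sum_prod_type, Finset.sum_comm,
      ← Fin.sum_univ_eq_sum_range (fun j => ((N.choose j : ℝ) / 2 ^ N) *
            hockey v q (Real.log τ - Real.log c - j * h))]
    refine Finset.sum_congr rfl fun j _ => ?_
    unfold hockey
    rw [Finset.mul_sum]
    refine Finset.sum_congr rfl fun i _ => ?_
    have hE : Real.exp (Real.log τ - Real.log c - ((j : ℕ) : ℝ) * h)
        = τ / c * Real.exp (-((j : ℕ) : ℝ) * h) := by
      rw [sub_eq_add_neg, Real.exp_add, Real.exp_sub, Real.exp_log hτ, Real.exp_log hcpos, neg_mul]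
    rw [hE]
    change _ = r j * _
    rw [mul_max_of_nonneg _ _ (hrpos j).le]
    simp only [tensorVec, hs]
    congr 1
    · field_simp
    · ring
  obtain ⟨Λ, h1, h2, h3⟩ := blackwell (tensorVec p r) (tensorVec p' r) (tensorVec q s)
    (fun x => mul_pos (hq _) (hspos _)) hsum (by
      intro τ
      rcases le_or_gt τ 0 with hτ | hτ
      · have : ∀ v : Fin d → ℝ, (∀ i, 0 ≤ v i) → ∑ x, max (tensorVec v r x - τ * tensorVec q s x) 0
            = ∑ x, (tensorVec v r x - τ * tensorVec q s x) := by
          intro v hv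
          refine Finset.sum_congr rfl fun x _ => max_eq_left ?_
          have h1 : 0 ≤ tensorVec v r x := mul_nonneg (hv _) (hrpos _).le
          have h2 : 0 ≤ tensorVec q s x := mul_nonneg (hq _).le (hspos _).le
          nlinarith
        rw [this p hp, this p' hp', Finset.sum_sub_distrib, Finset.sum_sub_distrib, hsum]
      · rw [key p τ hτ, key p' τ hτ, ← sub_nonneg, ← Finset.sum_sub_distrib]
        have := hN (Real.log τ - Real.log c)
        have h2 := mul_nonneg (show (0:ℝ) ≤ 1 / 2 ^ N by positivity) this
        rw [Finset.mul_sum] at h2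
        refine h2.trans_eq (Finset.sum_congr rfl fun j _ => ?_)
        ring)
  exact ⟨N+1, r, s, ⟨fun j => (hrpos j).le, hrs⟩, ⟨fun j => (hspos j).le, hss⟩, hspos, Λ, h1, h2, h3⟩

lemma forward {d : ℕ} [Nonempty (Fin d)] (p p' q : Fin d → ℝ)
    (hp : ∀ i, 0 < p i) (hp' : ∀ i, 0 < p' i) (hq : ∀ i, 0 < q i)
    (hps : ∑ i, p i = 1) (hps' : ∑ i, p' i = 1) (hqs : ∑ i, q i = 1)
    (H : ∀ α, renyiD α p' q ≤ renyiD α p q) : CatCond p p' q := by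
  intro ε hε
  by_cases hne : p' = q
  · subst hne
    have hmul : ∀ v : Fin d → ℝ, ∑ i, v i = 1 →
        (Matrix.of fun (x y : Fin d × Fin 1) => p' x.1).mulVec (tensorVec v (fun _ : Fin 1 => 1))
          = tensorVec p' (fun _ : Fin 1 => 1) := by
      intro v hv
      funext x
      simp [Matrix.mulVec, dotProduct, tensorVec, Fintype.sum_prod_type, ← Finset.mul_sum, hv]
    refine ⟨1, fun _ => 1, fun _ => 1, ⟨by simp, by simp⟩, ⟨by simp, by simp⟩, by simp,
      Matrix.of fun x y => p' x.1, ⟨fun i j => (hp' _).le, fun j => ?_⟩, hmul p' hps', p',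
      ⟨fun i => (hp' i).le, hps'⟩, ?_, hmul p hps⟩
    · simp [Fintype.sum_prod_type, hps']
    · simp [traceDist, hε.le]
  set e : ℝ := min ε (1/2) with he
  have he0 : 0 < e := lt_min hε (by norm_num)
  have he1 : e ≤ 1/2 := min_le_right _ _
  have heε : e ≤ ε := min_le_left _ _
  obtain ⟨ia, hia⟩ := Finite.exists_max (fun i => Real.log (p i / q i))
  obtain ⟨ib, hib⟩ := Finite.exists_min (fun i => Real.log (p i / q i))
  set a := Real.log (p ia / q ia) with ha_def
  set b := Real.log (p ib / q ib) with hb_def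
  have hpx : ∀ i, p i = q i * Real.exp (Real.log (p i / q i)) := by
    intro i
    rw [Real.exp_log (div_pos (hp i) (hq i))]
    have := (hq i).ne'
    field_simp
  have ha : ∀ i, p i ≤ q i * Real.exp a := by
    intro i
    rw [hpx i]
    exact mul_le_mul_of_nonneg_left (Real.exp_le_exp.2 (hia i)) (hq i).le
  have hb : ∀ i, q i * Real.exp b ≤ p i := by
    intro i
    conv_rhs => rw [hpx i]
    exact mul_le_mul_of_nonneg_left (Real.exp_le_exp.2 (hib i)) (hq i).le
  have ha' := edge_hi p p' q a hp hp' hq hqs ha H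
  have hb' := edge_lo p p' q b hp hp' hq hqs hb H
  obtain ⟨i1, hi1⟩ := exists_gt_of_ne p' q hps' hqs hne
  obtain ⟨i2, hi2⟩ := exists_gt_of_ne q p' hqs hps' (Ne.symm hne)
  have hEa : 1 < Real.exp a := by
    have := ha' i1
    have := hq i1
    by_contra hcon
    push Not at hcon
    nlinarith
  have hEb : Real.exp b < 1 := by
    have := hb' i2
    have := hq i2
    by_contra hcon
    push Not at hcon
    nlinarith
  have ha0 : 0 < a := Real.one_lt_exp_iff.1 hEa
  have hb0 : b < 0 := by
    have := Real.exp_lt_one_iff.1 hEb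
    exact this
  have hEb0 := Real.exp_pos b
  have hA : 0 < (1 - e) * Real.exp a + e := by nlinarith
  have hB : 0 < (1 - e) * Real.exp b + e := by nlinarith
  set a2 := Real.log ((1 - e) * Real.exp a + e) with ha2
  set b2 := Real.log ((1 - e) * Real.exp b + e) with hb2
  have hEa2 : Real.exp a2 = (1 - e) * Real.exp a + e := Real.exp_log hA
  have hEb2 : Real.exp b2 = (1 - e) * Real.exp b + e := Real.exp_log hB
  have haa : a2 < a := by
    rw [← Real.exp_lt_exp, hEa2]; nlinarith
  have hbb : b < b2 := by
    rw [← Real.exp_lt_exp, hEb2]; nlinarith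
  have hba : b2 ≤ a2 := by
    rw [← Real.exp_le_exp, hEa2, hEb2]; nlinarith
  set p2 : Fin d → ℝ := fun i => (1 - e) * p' i + e * q i with hp2
  have hp2pos : ∀ i, 0 < p2 i := by
    intro i
    have h1 := hp' i
    have h2 := hq i
    have h3 : 0 < 1 - e := by linarith
    simp only [hp2]; positivity
  have hp2s : ∑ i, p2 i = 1 := by
    simp only [hp2]
    rw [Finset.sum_add_distrib, ← Finset.mul_sum, ← Finset.mul_sum, hps', hqs]; ring
  have hp2a : ∀ i, p2 i ≤ q i * Real.exp a2 := by
    intro i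
    rw [hEa2]; simp only [hp2]
    have := mul_le_mul_of_nonneg_left (ha' i) (show 0 ≤ 1 - e by linarith)
    nlinarith
  have hp2b : ∀ i, q i * Real.exp b2 ≤ p2 i := by
    intro i
    rw [hEb2]; simp only [hp2]
    have := mul_le_mul_of_nonneg_left (hb' i) (show 0 ≤ 1 - e by linarith)
    nlinarith
  have hlow : ∀ t, t ≤ b2 → hockey p2 q t = 1 - Real.exp t := by
    intro t ht
    rw [← hockey_lin p2 q hp2s hqs t]
    refine Finset.sum_congr rfl fun i _ => max_eq_left ?_
    have := mul_le_mul_of_nonneg_left (Real.exp_le_exp.2 ht) (hq i).le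
    linarith [hp2b i]
  have hhigh : ∀ t, a2 ≤ t → hockey p2 q t = 0 := by
    intro t ht
    refine Finset.sum_eq_zero fun i _ => max_eq_right ?_
    have := mul_le_mul_of_nonneg_left (Real.exp_le_exp.2 ht) (hq i).le
    linarith [hp2a i]
  have hmix : ∀ t, hockey p2 q t ≤ (1 - e) * hockey p' q t + e * hockey q q t :=
    hockey_mix p' q e he0.le (by linarith)
  have hself := hockey_self_le p' q hq hps' hqs
  have hG : Continuous (fun t => hockey p q t - hockey p2 q t) :=
    (hockey_cont p q).sub (hockey_cont p2 q)
  obtain ⟨h, -, N, hN⟩ := claimB (fun t => hockey p q t - hockey p2 q t) hG b b2 a2 a hbb hba haa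
    (by
      intro t ht
      rw [hlow t ht]; linarith [hockey_ge p q hps hqs t])
    (by
      intro t ht
      rw [hhigh t ht]; linarith [hockey_nonneg p q t])
    (by
      intro t ht1 ht
      rw [hlow t ht, sub_pos, ← hockey_lin p q hps hqs t]
      refine Finset.sum_lt_sum (fun _ _ => le_max_left _ _) ⟨ib, Finset.mem_univ _, ?_⟩
      apply lt_max_of_lt_right
      rw [hpx ib]
      have := mul_lt_mul_of_pos_left (Real.exp_lt_exp.2 ht1) (hq ib)
      linarith)
    (by
      intro t ht ht1
      rw [hhigh t ht, sub_zero]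
      refine Finset.sum_pos' (fun _ _ => le_max_right _ _) ⟨ia, Finset.mem_univ _, ?_⟩
      apply lt_max_of_lt_left
      rw [hpx ia]
      have := mul_lt_mul_of_pos_left (Real.exp_lt_exp.2 ht1) (hq ia)
      linarith)
    (by
      intro L
      have hc := hockey_cont p q
      have hc' := hockey_cont p' q
      have hc2 := hockey_cont p2 q
      have h1 := laplace_diff_nonneg p p' q b a hp hp' hq hps hps' hqs hb ha hb' ha' H L
      have h2 : 0 < ∫ t in b..a, (hockey p' q t - hockey p2 q t) * Real.exp (L * t) := by
        refine intervalIntegral.integral_pos (by linarith) (by fun_prop) ?_ ⟨0, ⟨hb0.le, ha0.le⟩, ?_⟩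
        · intro t _
          refine mul_nonneg ?_ (Real.exp_pos _).le
          nlinarith [hmix t, hself t]
        · refine mul_pos ?_ (Real.exp_pos _)
          have hq0 : hockey q q 0 = 0 := by simp [hockey]
          have hp0 : 0 < hockey p' q 0 := by
            refine Finset.sum_pos' (fun _ _ => le_max_right _ _) ⟨i1, Finset.mem_univ _, ?_⟩
            apply lt_max_of_lt_left
            simp; linarith
          have := hmix 0
          rw [hq0] at this
          nlinarith
      have h3 : ∫ t in b..a, (hockey p q t - hockey p2 q t) * Real.exp (L * t)
          = (∫ t in b..a, (hockey p q t - hockey p' q t) * Real.exp (L * t))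
            + ∫ t in b..a, (hockey p' q t - hockey p2 q t) * Real.exp (L * t) := by
        rw [← intervalIntegral.integral_add
          (Continuous.intervalIntegrable (by fun_prop) _ _)
          (Continuous.intervalIntegrable (by fun_prop) _ _)]
        congr 1
        funext t
        ring
      rw [h3]; linarith)
  obtain ⟨m, r, s, h1, h2, h3, Λ, h4, h5, h6⟩ := build_cat p p2 q hps hp2s (fun i => (hp i).le)
    (fun i => (hp2pos i).le) hq h N hN
  refine ⟨m, r, s, h1, h2, h3, Λ, h4, h5, p2, ⟨fun i => (hp2pos i).le, hp2s⟩, ?_, h6⟩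
  have : ∑ i, |p2 i - p' i| ≤ ∑ i, e * (q i + p' i) := by
    refine Finset.sum_le_sum fun i _ => ?_
    have e1 : p2 i - p' i = e * (q i - p' i) := by simp only [hp2]; ring
    rw [e1, abs_mul, abs_of_pos he0]
    refine mul_le_mul_of_nonneg_left ?_ he0.le
    rw [abs_le]
    constructor <;> linarith [hp' i, hq i]
  rw [← Finset.mul_sum, Finset.sum_add_distrib, hqs, hps'] at this
  unfold traceDist
  linarith

/-- **Second laws for block-diagonal states (Theorem 3, classical form).** For strictly positive
probability vectors `p, p'` and the Gibbs distribution `q`, monotonicity of all Rényi divergences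
`D_α(p‖q) ≥ D_α(p'‖q)` for `α ∈ (-∞,∞)` is equivalent to the existence, for every `ε > 0`, of a
catalyst `r` (with strictly positive Gibbs-like reference `s`) and a Gibbs-stochastic map sending
`p ⊗ r` to `p'' ⊗ r` with `d(p'', p') ≤ ε`. -/
theorem secondLaws_blockDiagonal {d : ℕ} (β : ℝ) (hβ : 0 < β) (E : Fin d → ℝ)
    (Z : ℝ) (hZ : Z = ∑ j, Real.exp (-β * E j))
    (q : Fin d → ℝ) (hq : ∀ i, q i = Real.exp (-β * E i) / Z)
    (p p' : Fin d → ℝ) (hp : IsProbVec p) (hp' : IsProbVec p')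
    (hppos : ∀ i, 0 < p i) (hp'pos : ∀ i, 0 < p' i) :
    (∀ α : ℝ, renyiD α p' q ≤ renyiD α p q) ↔
      (∀ ε : ℝ, 0 < ε →
        ∃ (m : ℕ) (r s : Fin m → ℝ),
          IsProbVec r ∧ IsProbVec s ∧ (∀ j, 0 < s j) ∧
          ∃ Λ : Matrix (Fin d × Fin m) (Fin d × Fin m) ℝ,
            ColStochastic Λ ∧
            Λ.mulVec (tensorVec q s) = tensorVec q s ∧
            ∃ p'' : Fin d → ℝ, IsProbVec p'' ∧ traceDist p'' p' ≤ ε ∧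
              Λ.mulVec (tensorVec p r) = tensorVec p'' r) := by
  have hd : Nonempty (Fin d) := by
    by_contra hcon
    rw [not_nonempty_iff] at hcon
    have := hp.2
    simp at this
  have hZpos : 0 < Z := by
    rw [hZ]
    exact Finset.sum_pos (fun j _ => Real.exp_pos _) Finset.univ_nonempty
  have hqpos : ∀ i, 0 < q i := fun i => by
    rw [hq i]; exact div_pos (Real.exp_pos _) hZpos
  have hqs : ∑ i, q i = 1 := by
    simp_rw [hq]
    rw [← Finset.sum_div, ← hZ, div_self hZpos.ne']
  exact ⟨fun H => forward p p' q hppos hp'pos hqpos hp.2 hp'.2 hqs H,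
    fun hC α => backward p p' q hp hppos hp'pos hqpos hqs hC α⟩
end

section
/- Fix β > 0, energies E ∈ ℝ^d, and the Gibbs distribution q_i = e^{-βE_i}/Z with Z = ∑_j e^{-βE_j}. Let p, p' ∈ ℝ^d be probability vectors with strictly positive entries. Suppose there exist a dimension m, probability vectors r, s ∈ ℝ^m with r and s strictly positive, and a (dm) × (dm) stochastic matrix Λ with Λ(q ⊗ s) = q ⊗ s and Λ(p ⊗ r) = p' ⊗ r. Then for every α ∈ ℝ, D_α(p ‖ q) ≥ D_α(p' ‖ q). -/
open scoped BigOperators Topology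
open Filter

lemma convexOn_rpow_neg_aux {α : ℝ} (hα : α < 0) :
    ConvexOn ℝ (Set.Ioi 0) (fun x : ℝ => x ^ α) := by
  refine ⟨convex_Ioi 0, ?_⟩
  intro x hx y hy a b ha hb hab
  have hx' : 0 < x := hx
  have hy' : 0 < y := hy
  have hz : 0 < a • x + b • y := (convex_Ioi (0 : ℝ)) hx hy ha hb hab
  have h1 := strictConcaveOn_log_Ioi.concaveOn.2 hx hy ha hb hab
  have h2 := convexOn_exp.2 (Set.mem_univ (Real.log x * α)) (Set.mem_univ (Real.log y * α))
    ha hb hab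
  simp only [Real.rpow_def_of_pos hx', Real.rpow_def_of_pos hy', Real.rpow_def_of_pos hz]
  refine le_trans (Real.exp_le_exp.2 ?_) h2
  simp only [smul_eq_mul] at h1 ⊢
  nlinarith

lemma fdiv_dpi {ι : Type*} [Fintype ι] (f : ℝ → ℝ) (hf : ConvexOn ℝ (Set.Ioi 0) f)
    (P P' Q : ι → ℝ) (hP : ∀ i, 0 < P i) (hQ : ∀ i, 0 < Q i)
    (Λ : Matrix ι ι ℝ) (hΛ : ColStochastic Λ)
    (hfix : Λ.mulVec Q = Q) (htrans : Λ.mulVec P = P') :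
    ∑ i, Q i * f (P' i / Q i) ≤ ∑ i, Q i * f (P i / Q i) := by
  have key : ∀ i, Q i * f (P' i / Q i) ≤ ∑ j, Λ i j * (Q j * f (P j / Q j)) := by
    intro i
    have hQi := hQ i
    have hw : ∑ j, Λ i j * Q j / Q i = 1 := by
      rw [← Finset.sum_div, div_eq_one_iff_eq hQi.ne']
      exact congrFun hfix i
    have hJ := hf.map_sum_le (t := Finset.univ) (w := fun j => Λ i j * Q j / Q i)
      (p := fun j => P j / Q j)
      (fun j _ => div_nonneg (mul_nonneg (hΛ.1 i j) (hQ j).le) hQi.le) hw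
      (fun j _ => div_pos (hP j) (hQ j))
    have h1 : ∑ j, (Λ i j * Q j / Q i) • (P j / Q j) = P' i / Q i := by
      rw [← htrans]
      simp only [Matrix.mulVec, dotProduct, Finset.sum_div, smul_eq_mul]
      refine Finset.sum_congr rfl fun j _ => ?_
      have := (hQ j).ne'
      field_simp
    rw [h1] at hJ
    calc Q i * f (P' i / Q i) ≤ Q i * _ := mul_le_mul_of_nonneg_left hJ hQi.le
      _ = _ := by
        rw [Finset.mul_sum]
        refine Finset.sum_congr rfl fun j _ => ?_
        simp only [smul_eq_mul]
        field_simp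
  calc _ ≤ ∑ i, ∑ j, Λ i j * (Q j * f (P j / Q j)) := Finset.sum_le_sum fun i _ => key i
    _ = _ := by
      rw [Finset.sum_comm]
      refine Finset.sum_congr rfl fun j _ => ?_
      rw [← Finset.sum_mul, hΛ.2 j, one_mul]

/-- The Rényi sum. -/
noncomputable def rsum {ι : Type*} [Fintype ι] (α : ℝ) (p q : ι → ℝ) : ℝ :=
  ∑ i, q i * (p i / q i) ^ α

lemma rsum_eq {ι : Type*} [Fintype ι] (α : ℝ) (p q : ι → ℝ) (hp : ∀ i, 0 < p i)
    (hq : ∀ i, 0 < q i) : ∑ i, rpow0 (p i) α * rpow0 (q i) (1 - α) = rsum α p q := by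
  refine Finset.sum_congr rfl fun i _ => ?_
  have h := hq i
  rw [rpow0, rpow0, if_neg (hp i).ne', if_neg h.ne', Real.div_rpow (hp i).le h.le,
    Real.rpow_sub h, Real.rpow_one]
  ring

lemma rsum_tensor {ι κ : Type*} [Fintype ι] [Fintype κ] (α : ℝ) (p q : ι → ℝ) (r s : κ → ℝ)
    (hp : ∀ i, 0 < p i) (hq : ∀ i, 0 < q i) (hr : ∀ i, 0 < r i) (hs : ∀ i, 0 < s i) :
    rsum α (tensorVec p r) (tensorVec q s) = rsum α p q * rsum α r s := by
  simp only [rsum, tensorVec, Finset.sum_mul_sum, Fintype.sum_prod_type]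
  refine Finset.sum_congr rfl fun i _ => Finset.sum_congr rfl fun j _ => ?_
  rw [mul_div_mul_comm, Real.mul_rpow (div_pos (hp i) (hq i)).le (div_pos (hr j) (hs j)).le]
  ring

lemma rsum_pos {ι : Type*} [Fintype ι] [Nonempty ι] (α : ℝ) (p q : ι → ℝ) (hp : ∀ i, 0 < p i)
    (hq : ∀ i, 0 < q i) : 0 < rsum α p q :=
  Finset.sum_pos (fun i _ => mul_pos (hq i) (Real.rpow_pos_of_pos (div_pos (hp i) (hq i)) _))
    Finset.univ_nonempty

lemma kl_tensor {ι κ : Type*} [Fintype ι] [Fintype κ] (p q : ι → ℝ) (r s : κ → ℝ)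
    (hp : ∀ i, 0 < p i) (hq : ∀ i, 0 < q i) (hr : ∀ i, 0 < r i) (hs : ∀ i, 0 < s i)
    (hp1 : ∑ i, p i = 1) (hr1 : ∑ i, r i = 1) :
    ∑ x, tensorVec q s x * (tensorVec p r x / tensorVec q s x *
      Real.log (tensorVec p r x / tensorVec q s x)) =
    ∑ i, p i * Real.log (p i / q i) + ∑ j, r j * Real.log (r j / s j) := by
  have h : ∀ i j, q i * s j * (p i * r j / (q i * s j) * Real.log (p i * r j / (q i * s j))) =
      (p i * Real.log (p i / q i)) * r j + p i * (r j * Real.log (r j / s j)) := by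
    intro i j
    have h1 := (hq i).ne'
    have h2 := (hs j).ne'
    rw [mul_div_mul_comm, Real.log_mul (div_pos (hp i) (hq i)).ne' (div_pos (hr j) (hs j)).ne']
    field_simp
  simp only [tensorVec, Fintype.sum_prod_type, h, Finset.sum_add_distrib, ← Finset.mul_sum,
    ← Finset.sum_mul, hp1, hr1, mul_one, one_mul]

/-- **Generalized free energies are monotones under catalytic thermal operations.** If a
Gibbs-stochastic map `Λ` fixes `q ⊗ s` and maps `p ⊗ r` to `p' ⊗ r` (with catalyst `r`), then
`D_α(p ‖ q) ≥ D_α(p' ‖ q)` for every `α ∈ ℝ`. -/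
theorem renyiD_monotone_of_catalytic {d m : ℕ} (β : ℝ) (hβ : 0 < β) (E : Fin d → ℝ)
    (Z : ℝ) (hZ : Z = ∑ j, Real.exp (-β * E j))
    (q : Fin d → ℝ) (hq : ∀ i, q i = Real.exp (-β * E i) / Z)
    (p p' : Fin d → ℝ) (hp : IsProbVec p) (hp' : IsProbVec p')
    (hppos : ∀ i, 0 < p i) (hp'pos : ∀ i, 0 < p' i)
    (r s : Fin m → ℝ) (hr : IsProbVec r) (hs : IsProbVec s)
    (hrpos : ∀ j, 0 < r j) (hspos : ∀ j, 0 < s j)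
    (Λ : Matrix (Fin d × Fin m) (Fin d × Fin m) ℝ) (hΛ : ColStochastic Λ)
    (hfix : Λ.mulVec (tensorVec q s) = tensorVec q s)
    (htrans : Λ.mulVec (tensorVec p r) = tensorVec p' r) :
    ∀ α : ℝ, renyiD α p' q ≤ renyiD α p q := by
  have hd : Nonempty (Fin d) := by
    by_contra h
    rw [not_nonempty_iff] at h
    simpa using hp.2
  have hm : Nonempty (Fin m) := by
    by_contra h
    rw [not_nonempty_iff] at h
    simpa using hr.2
  have hZpos : 0 < Z := by
    rw [hZ]
    exact Finset.sum_pos (fun i _ => Real.exp_pos _) Finset.univ_nonempty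
  have hqpos : ∀ i, 0 < q i := fun i => by
    rw [hq]
    exact div_pos (Real.exp_pos _) hZpos
  have hP : ∀ x, 0 < tensorVec p r x := fun x => mul_pos (hppos _) (hrpos _)
  have hQ : ∀ x, 0 < tensorVec q s x := fun x => mul_pos (hqpos _) (hspos _)
  have dpi := fun f hf => fdiv_dpi f hf _ _ _ hP hQ Λ hΛ hfix htrans
  intro α
  have hS := rsum_pos α p q hppos hqpos
  have hS' := rsum_pos α p' q hp'pos hqpos
  have hR := rsum_pos α r s hrpos hspos
  have hT := rsum_tensor α p q r s hppos hqpos hrpos hspos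
  have hT' := rsum_tensor α p' q r s hp'pos hqpos hrpos hspos
  have hcvx : ConvexOn ℝ (Set.Ioi 0) (fun x : ℝ => x ^ α) → rsum α p' q ≤ rsum α p q := by
    intro hf
    have h : rsum α (tensorVec p' r) (tensorVec q s) ≤ rsum α (tensorVec p r) (tensorVec q s) :=
      dpi _ hf
    rw [hT, hT'] at h
    exact le_of_mul_le_mul_right h hR
  unfold renyiD
  rw [rsum_eq α p q hppos hqpos, rsum_eq α p' q hp'pos hqpos]
  by_cases h1 : α = 1
  · rw [if_pos h1, if_pos h1]
    have h := dpi _ (Real.convexOn_mul_log.subset Set.Ioi_subset_Ici_self (convex_Ioi 0))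
    rw [kl_tensor p q r s hppos hqpos hrpos hspos hp.2 hr.2,
      kl_tensor p' q r s hp'pos hqpos hrpos hspos hp'.2 hr.2] at h
    linarith
  rw [if_neg h1, if_neg h1]
  by_cases h0 : α < 0
  · rw [if_pos h0, if_pos h0]
    exact mul_le_mul_of_nonneg_left
      (Real.log_le_log hS' (hcvx (convexOn_rpow_neg_aux h0)))
      (one_div_nonneg.2 (by linarith))
  rw [if_neg h0, if_neg h0]
  rw [not_lt] at h0
  rcases lt_or_gt_of_ne h1 with h2 | h2
  · have hf := ((Real.concaveOn_rpow h0 h2.le).subset Set.Ioi_subset_Ici_self (convex_Ioi 0)).neg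
    have h := dpi _ hf
    simp only [Pi.neg_apply, mul_neg, Finset.sum_neg_distrib, neg_le_neg_iff] at h
    change rsum α (tensorVec p r) (tensorVec q s) ≤ rsum α (tensorVec p' r) (tensorVec q s) at h
    rw [hT, hT'] at h
    exact mul_le_mul_of_nonpos_left (Real.log_le_log hS (le_of_mul_le_mul_right h hR))
      (one_div_nonpos.2 (by linarith))
  · exact mul_le_mul_of_nonneg_left
      (Real.log_le_log hS'
        (hcvx ((convexOn_rpow h2.le).subset Set.Ioi_subset_Ici_self (convex_Ioi 0))))
      (one_div_nonneg.2 (by linarith))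
end

section
/- Fix β > 0, energies E ∈ ℝ^d, Gibbs weights g_i = e^{-βE_i}, Z = ∑_i g_i, and q = g/Z. Let p, p' ∈ ℝ^d be probability vectors such that p thermo-majorizes p', i.e. ∑_i max(p_i − t g_i, 0) ≥ ∑_i max(p'_i − t g_i, 0) for all t ≥ 0. Then the nonequilibrium free energy F(p) = ∑_i p_i E_i − β^{-1} H(p) satisfies F(p) ≥ F(p'), where H(p) = −∑_i p_i ln p_i is the Shannon entropy (with 0·ln 0 = 0). -/
open scoped BigOperators Topology
open Filter

/-- Auxiliary interpolation between `x log x - x` and an affine function. -/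
noncomputable def auxK (x T : ℝ) : ℝ :=
  if T ≤ x then x * Real.log x - x else x * Real.log T - T

lemma auxK_hasDerivAt (x T : ℝ) (hT : 0 < T) :
    HasDerivAt (auxK x) (-(max (x - T) 0 / T - x / T + 1)) T := by
  have h2 : HasDerivAt (fun T => x * Real.log T - T) (x / T - 1) T := by
    have := ((Real.hasDerivAt_log hT.ne').const_mul x).sub (hasDerivAt_id T)
    rw [div_eq_mul_inv]
    exact this
  have h1 : HasDerivAt (fun _ : ℝ => x * Real.log x - x) 0 T := hasDerivAt_const _ _
  rcases lt_trichotomy T x with h | h | h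
  · rw [max_eq_left (by linarith)]
    have e : -((x - T) / T - x / T + 1) = 0 := by field_simp; ring
    rw [e]
    refine h1.congr_of_eventuallyEq ?_
    filter_upwards [Iio_mem_nhds h] with y hy
    have hy' : y ≤ x := le_of_lt hy
    simp [auxK, hy']
  · subst h
    have e : -(max (T - T) 0 / T - T / T + 1) = 0 := by
      rw [div_self hT.ne']; simp
    have e2 : T / T - 1 = 0 := by rw [div_self hT.ne']; simp
    rw [e]
    rw [e2] at h2
    rw [← hasDerivWithinAt_univ, ← Set.Iic_union_Ici (a := T)]
    refine HasDerivWithinAt.union ?_ ?_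
    · refine h1.hasDerivWithinAt.congr (fun y hy => ?_) ?_
      · have hy' : y ≤ T := hy
        simp [auxK, hy']
      · simp [auxK]
    · refine h2.hasDerivWithinAt.congr (fun y hy => ?_) ?_
      · have hy' : T ≤ y := hy
        rcases hy'.eq_or_lt with h | h
        · subst h; simp [auxK]
        · simp [auxK, not_le.mpr h]
      · simp [auxK]
  · rw [max_eq_right (by linarith)]
    have e : -(0 / T - x / T + 1) = x / T - 1 := by ring
    rw [e]
    refine h2.congr_of_eventuallyEq ?_
    filter_upwards [Ioi_mem_nhds h] with y hy
    have hy' : x < y := hy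
    simp [auxK, not_le.mpr hy']

lemma auxK_tendsto (x : ℝ) (hx : 0 ≤ x) :
    Tendsto (auxK x) (𝓝[>] 0) (𝓝 (x * Real.log x - x)) := by
  rcases hx.eq_or_lt with h | h
  · subst h
    have : Tendsto (fun T : ℝ => -T) (𝓝[>] 0) (𝓝 (-0)) :=
      (continuous_neg.tendsto 0).mono_left nhdsWithin_le_nhds
    simp only [zero_mul, sub_zero, neg_zero] at this ⊢
    refine this.congr' ?_
    filter_upwards [self_mem_nhdsWithin] with y hy
    have hy' : (0 : ℝ) < y := hy
    simp [auxK, not_le.mpr hy']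
  · refine tendsto_const_nhds.congr' ?_
    filter_upwards [nhdsWithin_le_nhds (Iio_mem_nhds h)] with y hy
    have hy' : y ≤ x := le_of_lt hy
    simp [auxK, hy']

lemma auxK_sum_le {d : ℕ} (g x x' : Fin d → ℝ) (hg : ∀ i, 0 < g i)
    (hx : ∀ i, 0 ≤ x i) (hx' : ∀ i, 0 ≤ x' i)
    (hs : ∑ i, g i * x i = ∑ i, g i * x' i)
    (hTM : ∀ t : ℝ, 0 < t →
      ∑ i, g i * max (x' i - t) 0 ≤ ∑ i, g i * max (x i - t) 0) :
    ∑ i, g i * (x' i * Real.log (x' i) - x' i) ≤ ∑ i, g i * (x i * Real.log (x i) - x i) := by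
  let Ψ : ℝ → ℝ := fun T => ∑ i, g i * auxK (x i) T - ∑ i, g i * auxK (x' i) T
  have hd : ∀ T, 0 < T → HasDerivAt Ψ
      (∑ i, g i * (-(max (x i - T) 0 / T - x i / T + 1))
        - ∑ i, g i * (-(max (x' i - T) 0 / T - x' i / T + 1))) T := by
    intro T hT
    exact (HasDerivAt.fun_sum fun i _ => (auxK_hasDerivAt (x i) T hT).const_mul (g i)).sub
      (HasDerivAt.fun_sum fun i _ => (auxK_hasDerivAt (x' i) T hT).const_mul (g i))
  have key : ∀ (y : Fin d → ℝ) (T : ℝ),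
      ∑ i, g i * (-(max (y i - T) 0 / T - y i / T + 1))
       = -(∑ i, g i * max (y i - T) 0) / T + (∑ i, g i * y i) / T - ∑ i, g i := by
    intro y T
    rw [neg_div, Finset.sum_div, Finset.sum_div, ← Finset.sum_neg_distrib,
      ← Finset.sum_add_distrib, ← Finset.sum_sub_distrib]
    exact Finset.sum_congr rfl fun i _ => by ring
  have hanti : AntitoneOn Ψ (Set.Ioi 0) := by
    refine antitoneOn_of_deriv_nonpos (convex_Ioi 0)
      (fun T hT => (hd T hT).continuousAt.continuousWithinAt)
      (fun T hT => ?_) (fun T hT => ?_)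
    · rw [interior_Ioi] at hT
      exact (hd T hT).differentiableAt.differentiableWithinAt
    · rw [interior_Ioi] at hT
      have hT' : 0 < T := hT
      rw [(hd T hT).deriv, key, key, hs]
      have := div_le_div_of_nonneg_right (hTM T hT') hT'.le
      rw [neg_div, neg_div]
      linarith
  have hM : ∃ M : ℝ, 0 < M ∧ ∀ i, x i < M ∧ x' i < M := by
    refine ⟨∑ i, (x i + x' i) + 1, ?_, fun i => ?_⟩
    · have := Finset.sum_nonneg (s := Finset.univ) fun i _ => add_nonneg (hx i) (hx' i)
      linarith
    · have := Finset.single_le_sum (s := Finset.univ) (f := fun i => x i + x' i)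
        (fun i _ => add_nonneg (hx i) (hx' i)) (Finset.mem_univ i)
      have := hx i
      have := hx' i
      constructor <;> linarith
  obtain ⟨M, hM0, hM⟩ := hM
  have hΨM : Ψ M = 0 := by
    have k2 : ∀ y : Fin d → ℝ, (∀ i, y i < M) → ∑ i, g i * auxK (y i) M
        = (∑ i, g i * y i) * Real.log M - (∑ i, g i) * M := by
      intro y hy
      rw [Finset.sum_mul, Finset.sum_mul, ← Finset.sum_sub_distrib]
      refine Finset.sum_congr rfl fun i _ => ?_
      rw [auxK, if_neg (not_le.mpr (hy i))]
      ring
    simp only [Ψ]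
    rw [k2 x fun i => (hM i).1, k2 x' fun i => (hM i).2, hs, sub_self]
  have hlim : Tendsto Ψ (𝓝[>] 0) (𝓝 (∑ i, g i * (x i * Real.log (x i) - x i)
      - ∑ i, g i * (x' i * Real.log (x' i) - x' i))) :=
    (tendsto_finsetSum _ fun i _ => (auxK_tendsto (x i) (hx i)).const_mul (g i)).sub
      (tendsto_finsetSum _ fun i _ => (auxK_tendsto (x' i) (hx' i)).const_mul (g i))
  have : 0 ≤ ∑ i, g i * (x i * Real.log (x i) - x i)
      - ∑ i, g i * (x' i * Real.log (x' i) - x' i) := by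
    refine ge_of_tendsto hlim ?_
    filter_upwards [self_mem_nhdsWithin, nhdsWithin_le_nhds (Iio_mem_nhds hM0)] with T hT hTM'
    rw [← hΨM]
    exact hanti hT hM0 (le_of_lt hTM')
  linarith

/-- **Thermo-majorization implies the standard second law.** If `p` thermo-majorizes `p'`
(w.r.t. Gibbs weights `g_i = e^{-βE_i}`), then the nonequilibrium free energy
`F(p) = ∑ p_i E_i − β⁻¹ H(p)` does not increase: `F(p') ≤ F(p)`. -/
theorem freeEnergy_le_of_thermoMajorizes {d : ℕ} (β : ℝ) (hβ : 0 < β)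
    (E g : Fin d → ℝ) (hg : ∀ i, g i = Real.exp (-β * E i))
    (p p' : Fin d → ℝ) (hp : IsProbVec p) (hp' : IsProbVec p')
    (hTM : ∀ t : ℝ, 0 ≤ t →
      ∑ i, max (p' i - t * g i) 0 ≤ ∑ i, max (p i - t * g i) 0) :
    ∑ i, p' i * E i - β⁻¹ * (-∑ i, p' i * Real.log (p' i))
      ≤ ∑ i, p i * E i - β⁻¹ * (-∑ i, p i * Real.log (p i)) := by
  have hg0 : ∀ i, 0 < g i := fun i => by rw [hg]; exact Real.exp_pos _
  have hm : ∀ (y : Fin d → ℝ) i, g i * (y i / g i) = y i := fun y i =>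
    mul_div_cancel₀ _ (hg0 i).ne'
  have hmax : ∀ (y : Fin d → ℝ) (t : ℝ) i,
      g i * max (y i / g i - t) 0 = max (y i - t * g i) 0 := fun y t i => by
    rw [mul_max_of_nonneg _ _ (hg0 i).le, mul_sub, hm, mul_zero, mul_comm t]
  have main := auxK_sum_le g (fun i => p i / g i) (fun i => p' i / g i) hg0
    (fun i => div_nonneg (hp.1 i) (hg0 i).le) (fun i => div_nonneg (hp'.1 i) (hg0 i).le)
    (by simp only [hm]; rw [hp.2, hp'.2])
    (fun t ht => by simp only [hmax]; exact hTM t ht.le)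
  have hF : ∀ y : Fin d → ℝ, IsProbVec y →
      ∑ i, g i * (y i / g i * Real.log (y i / g i) - y i / g i)
      = β * (∑ i, y i * E i - β⁻¹ * (-∑ i, y i * Real.log (y i))) - 1 := by
    intro y hy
    have e : β * (∑ i, y i * E i - β⁻¹ * (-∑ i, y i * Real.log (y i)))
        = β * ∑ i, y i * E i + ∑ i, y i * Real.log (y i) := by
      field_simp
      ring
    rw [e, ← hy.2, Finset.mul_sum, ← Finset.sum_add_distrib, ← Finset.sum_sub_distrib]
    refine Finset.sum_congr rfl fun i _ => ?_
    rw [mul_sub, ← mul_assoc, hm]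
    rcases (hy.1 i).eq_or_lt with h | h
    · simp [← h]
    · rw [Real.log_div h.ne' (hg0 i).ne', hg i, Real.log_exp]
      ring
  simp only [hF p hp, hF p' hp'] at main
  exact le_of_mul_le_mul_left (by linarith) hβ
end

section
/- Fix β > 0, energies E ∈ ℝ^d, Gibbs weights g_i = e^{-βE_i}, Z = ∑_i g_i, and the Gibbs distribution q = g/Z. Let p ∈ ℝ^d be a probability vector with support S = {i : p_i > 0}, and let W > 0. Model a battery as a two-level system with energies (0, W), so the joint Gibbs weight vector is G_{(i,b)} = e^{-βE_i} e^{-βWb} for b ∈ {0,1}. Then there exists a stochastic matrix Λ on ℝ^{2d} with Λ G = G and Λ (p ⊗ (1,0)) = q ⊗ (0,1) if and only if W ≤ β^{-1} ln( Z / ∑_{i∈S} e^{-βE_i} ). The right-hand side equals β^{-1} D_0(p‖q), so the single-shot extractable work is F_0(p) − F_0(q) with F_α(p) = β^{-1}[ln Z + D_α(p‖q)]. -/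
open scoped BigOperators Topology
open Filter

/-- **Single-shot distillable work (`F_0`).** With a qubit battery of gap `W`, a Gibbs-stochastic
map sending `p ⊗ |0⟩` to `q ⊗ |1⟩` exists iff `W ≤ β⁻¹ ln(Z / ∑_{i ∈ supp p} e^{-βE_i})`;
moreover the latter bound equals `β⁻¹ D_0(p‖q)`. -/
theorem single_shot_distillable_work {d : ℕ} (β : ℝ) (hβ : 0 < β) (E : Fin d → ℝ)
    (g : Fin d → ℝ) (hg : ∀ i, g i = Real.exp (-β * E i))
    (Z : ℝ) (hZ : Z = ∑ i, g i)
    (q : Fin d → ℝ) (hq : ∀ i, q i = g i / Z)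
    (p : Fin d → ℝ) (hp : IsProbVec p)
    (W : ℝ) (hW : 0 < W)
    (G : Fin d × Fin 2 → ℝ)
    (hG : ∀ (i : Fin d) (b : Fin 2),
      G (i, b) = Real.exp (-β * E i) * Real.exp (-β * W * ((b : ℕ) : ℝ))) :
    ((∃ Λ : Matrix (Fin d × Fin 2) (Fin d × Fin 2) ℝ,
        ColStochastic Λ ∧ Λ.mulVec G = G ∧
        Λ.mulVec (tensorVec p ![1, 0]) = tensorVec q ![0, 1]) ↔
      W ≤ β⁻¹ * Real.log
        (Z / ∑ i ∈ Finset.univ.filter (fun i => 0 < p i), Real.exp (-β * E i)))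
    ∧ β⁻¹ * Real.log
        (Z / ∑ i ∈ Finset.univ.filter (fun i => 0 < p i), Real.exp (-β * E i))
      = β⁻¹ * renyiD 0 p q := by
  classical
  obtain ⟨hp0, hp1⟩ := hp
  set S := Finset.univ.filter (fun i => 0 < p i) with hS
  set s := ∑ i ∈ S, Real.exp (-β * E i) with hs
  set w := Real.exp (-β * W) with hw
  have hgpos : ∀ i, 0 < g i := fun i => by rw [hg]; exact Real.exp_pos _
  have hwpos : 0 < w := Real.exp_pos _
  have hSne : S.Nonempty := by
    by_contra h
    rw [Finset.not_nonempty_iff_eq_empty, hS, Finset.filter_eq_empty_iff] at h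
    have : ∑ i, p i = 0 := Finset.sum_eq_zero fun i hi =>
      le_antisymm (not_lt.mp (h hi)) (hp0 i)
    linarith
  have hspos : 0 < s := Finset.sum_pos (fun i _ => Real.exp_pos _) hSne
  have hsg : s = ∑ i ∈ S, g i := by
    rw [hs]; exact Finset.sum_congr rfl fun i _ => (hg i).symm
  have hsZ : s ≤ Z := by
    rw [hsg, hZ]
    exact Finset.sum_le_sum_of_subset_of_nonneg (Finset.subset_univ _)
      fun i _ _ => (hgpos i).le
  have hZpos : 0 < Z := lt_of_lt_of_le hspos hsZ
  have hG0 : ∀ i, G (i, 0) = g i := fun i => by rw [hG, hg]; simp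
  have hG1 : ∀ i, G (i, 1) = g i * w := fun i => by rw [hG, hg]; simp [hw]
  have hqsum : ∑ i, q i = 1 := by
    simp_rw [hq]
    rw [← Finset.sum_div, ← hZ, div_self hZpos.ne']
  have hqpos : ∀ i, 0 < q i := fun i => by rw [hq]; exact div_pos (hgpos i) hZpos
  have hcond : W ≤ β⁻¹ * Real.log (Z / s) ↔ s ≤ Z * w := by
    rw [le_inv_mul_iff₀ hβ, Real.le_log_iff_exp_le (div_pos hZpos hspos), le_div_iff₀ hspos]
    have hww : Real.exp (β * W) * w = 1 := by
      rw [hw, ← Real.exp_add]; simp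
    have he := Real.exp_pos (β * W)
    constructor
    · intro h
      have := mul_le_mul_of_nonneg_right h hwpos.le
      calc s = Real.exp (β * W) * s * w := by linear_combination (-s) * hww
        _ ≤ _ := this
    · intro h
      have := mul_le_mul_of_nonneg_left h he.le
      calc _ ≤ _ := this
        _ = Z := by linear_combination Z * hww
  refine ⟨?_, ?_⟩
  · rw [hcond]
    constructor
    · rintro ⟨L, ⟨hL0, hL1⟩, hLG, hLp⟩
      have hz : ∀ i ∈ S, ∀ j, L (j, 0) (i, 0) = 0 := by
        intro i hi j
        have h := congrFun hLp (j, 0)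
        simp only [Matrix.mulVec, dotProduct, tensorVec, Fintype.sum_prod_type,
          Fin.sum_univ_two] at h
        simp only [Matrix.cons_val_zero, Matrix.cons_val_one, mul_zero, add_zero, mul_one] at h
        rw [Finset.sum_eq_zero_iff_of_nonneg
          (fun k _ => mul_nonneg (hL0 _ _) (hp0 k))] at h
        have h2 := h i (Finset.mem_univ _)
        have h3 : 0 < p i := by simpa [hS] using hi
        exact (mul_eq_zero.mp h2).resolve_right h3.ne'
      have hone : ∀ i ∈ S, ∑ j, L (j, 1) (i, 0) = 1 := by
        intro i hi
        have h := hL1 (i, 0)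
        simp only [Fintype.sum_prod_type, Fin.sum_univ_two, hz i hi, zero_add] at h
        exact h
      have hrow : ∀ j, ∑ i ∈ S, L (j, 1) (i, 0) * g i ≤ g j * w := by
        intro j
        have h := congrFun hLG (j, 1)
        simp only [Matrix.mulVec, dotProduct, Fintype.sum_prod_type,
          Fin.sum_univ_two, hG0, hG1] at h
        rw [← h]
        refine le_trans (Finset.sum_le_sum (g := fun i =>
          L (j, 1) (i, 0) * g i + L (j, 1) (i, 1) * (g i * w)) fun i _ => ?_)
          (Finset.sum_le_sum_of_subset_of_nonneg (Finset.subset_univ _) fun i _ _ => ?_)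
        · have := mul_nonneg (hL0 (j, 1) (i, 1)) (mul_nonneg (hgpos i).le hwpos.le)
          linarith
        · have := mul_nonneg (hL0 (j, 1) (i, 1)) (mul_nonneg (hgpos i).le hwpos.le)
          have := mul_nonneg (hL0 (j, 1) (i, 0)) (hgpos i).le
          linarith
      calc s = ∑ i ∈ S, (∑ j, L (j, 1) (i, 0)) * g i := by
            rw [hsg]
            exact Finset.sum_congr rfl fun i hi => by rw [hone i hi, one_mul]
        _ = ∑ j, ∑ i ∈ S, L (j, 1) (i, 0) * g i := by
            simp_rw [Finset.sum_mul]
            exact Finset.sum_comm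
        _ ≤ ∑ j, g j * w := Finset.sum_le_sum fun j _ => hrow j
        _ = Z * w := by rw [hZ, Finset.sum_mul]
    · intro hle
      set u := tensorVec q ![0, 1] with hu
      have hu0 : ∀ i, u (i, 0) = 0 := fun i => by simp [hu, tensorVec]
      have hu1 : ∀ i, u (i, 1) = q i := fun i => by simp [hu, tensorVec]
      set T := Z + Z * w with hT
      have hTs : 0 < T - s := by
        have := mul_pos hZpos hwpos
        linarith
      set r : Fin d × Fin 2 → ℝ := fun y => (G y - s * u y) / (T - s) with hr
      have husum : ∑ y, u y = 1 := by
        simp only [Fintype.sum_prod_type, Fin.sum_univ_two, hu0, hu1, zero_add, hqsum]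
      have hGsum : ∑ y, G y = T := by
        simp only [Fintype.sum_prod_type, Fin.sum_univ_two, hG0, hG1]
        rw [Finset.sum_add_distrib, ← Finset.sum_mul, ← hZ]
      have hrsum : ∑ y, r y = 1 := by
        simp only [hr]
        rw [← Finset.sum_div, Finset.sum_sub_distrib, ← Finset.mul_sum, husum, hGsum, mul_one,
          div_self hTs.ne']
      have hunn : ∀ y, 0 ≤ u y := by
        rintro ⟨i, b⟩
        fin_cases b
        · exact (hu0 i).ge
        · exact (hqpos i).le.trans (hu1 i).ge
      have hrnn : ∀ y, 0 ≤ r y := by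
        rintro ⟨i, b⟩
        refine div_nonneg ?_ hTs.le
        fin_cases b
        · change 0 ≤ G (i, 0) - s * u (i, 0)
          rw [hG0, hu0]
          have := hgpos i
          linarith
        · change 0 ≤ G (i, 1) - s * u (i, 1)
          rw [hG1, hu1]
          have h1 : g i = q i * Z := by rw [hq, div_mul_cancel₀ _ hZpos.ne']
          have := mul_le_mul_of_nonneg_left hle (hqpos i).le
          rw [h1]
          linarith
      have hA : ∑ x : Fin d × Fin 2, (if 0 < p x.1 ∧ x.2 = 0 then G x else 0) = s := by
        simp only [Fintype.sum_prod_type, Fin.sum_univ_two, hG0]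
        rw [hsg, hS, Finset.sum_filter]
        simp
      refine ⟨fun y x => if 0 < p x.1 ∧ x.2 = 0 then u y else r y, ⟨?_, ?_⟩, ?_, ?_⟩
      · intro y x
        dsimp only
        split_ifs
        · exact hunn y
        · exact hrnn y
      · intro x
        dsimp only
        split_ifs
        · exact husum
        · exact hrsum
      · funext y
        simp only [Matrix.mulVec, dotProduct]
        have h : ∀ x : Fin d × Fin 2, (if 0 < p x.1 ∧ x.2 = 0 then u y else r y) * G x
            = (u y - r y) * (if 0 < p x.1 ∧ x.2 = 0 then G x else 0) + r y * G x := by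
          intro x
          split_ifs <;> ring
        simp_rw [h]
        rw [Finset.sum_add_distrib, ← Finset.mul_sum, ← Finset.mul_sum, hA, hGsum]
        have : r y * (T - s) = G y - s * u y := div_mul_cancel₀ _ hTs.ne'
        linear_combination this
      · funext y
        simp only [Matrix.mulVec, dotProduct, Fintype.sum_prod_type, Fin.sum_univ_two]
        have h : ∀ i, (if 0 < p i then u y else r y) * p i = u y * p i := by
          intro i
          split_ifs with h
          · rfl
          · rw [le_antisymm (not_lt.mp h) (hp0 i)]; simp
        simp only [tensorVec, Matrix.cons_val_zero, Matrix.cons_val_one, mul_zero, add_zero,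
          mul_one, and_true]
        simp_rw [h]
        rw [← Finset.mul_sum, hp1, mul_one]
  · congr 1
    have h : ∑ i, rpow0 (p i) 0 * rpow0 (q i) (1 - 0) = s / Z := by
      rw [hsg, Finset.sum_div, hS, Finset.sum_filter]
      refine Finset.sum_congr rfl fun i _ => ?_
      unfold rpow0
      rw [if_neg (hqpos i).ne']
      rcases (hp0 i).eq_or_lt with h | h
      · simp [← h]
      · simp [h, h.ne', hq]
    unfold renyiD
    rw [if_neg (by norm_num), if_neg (by norm_num), h, ← inv_div s Z, Real.log_inv]
    norm_num
end

section
/- Let p, q ∈ ℝ^d be probability vectors with strictly positive entries, and for n ∈ ℕ let p^{⊗n}, q^{⊗n} ∈ ℝ^{d^n} denote their n-fold tensor powers. Define the smoothed max-divergence D_∞^ε(p^{⊗n} ‖ q^{⊗n}) = inf { D_∞(p̃ ‖ q^{⊗n}) : p̃ a probability vector on d^n outcomes with d(p̃, p^{⊗n}) ≤ ε }, where D_∞(p̃‖Q) = ln max_i (p̃_i/Q_i). Then lim_{ε→0^+} lim_{n→∞} (1/n) D_∞^ε(p^{⊗n} ‖ q^{⊗n}) = D_1(p ‖ q) = ∑_i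 p_i ln(p_i/q_i). -/
open scoped BigOperators Topology
open Filter

/-- The `n`-fold tensor power of `p`: `(p^{⊗n})_{(i₁,…,iₙ)} = p_{i₁}⋯p_{iₙ}`. -/
def tensorPow {d : ℕ} (p : Fin d → ℝ) (n : ℕ) : (Fin n → Fin d) → ℝ :=
  fun f => ∏ k, p (f k)

/-- Max-relative entropy `D_∞(p̃‖Q) = ln max_i (p̃_i / Q_i)`. -/
noncomputable def Dmax {ι : Type*} [Fintype ι] (pt Q : ι → ℝ) : ℝ :=
  Real.log (sSup (Set.range fun i => pt i / Q i))

/-- Min-relative entropy `D_0(p̃‖Q) = −ln ∑_{i : p̃_i > 0} Q_i`. -/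
noncomputable def Dmin {ι : Type*} [Fintype ι] (pt Q : ι → ℝ) : ℝ :=
  -Real.log (∑ i ∈ Finset.univ.filter (fun i => 0 < pt i), Q i)

/-- Smoothed max-divergence `D_∞^ε(p^{⊗n}‖q^{⊗n})`: infimum of `D_∞(p̃‖q^{⊗n})` over
probability vectors `p̃` within trace distance `ε` of `p^{⊗n}`. -/
noncomputable def DmaxSmooth {d : ℕ} (ε : ℝ) (n : ℕ) (p q : Fin d → ℝ) : ℝ :=
  sInf {x : ℝ | ∃ pt : (Fin n → Fin d) → ℝ,
    IsProbVec pt ∧ traceDist pt (tensorPow p n) ≤ ε ∧ x = Dmax pt (tensorPow q n)}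

/-- Smoothed min-divergence `D_0^ε(p^{⊗n}‖q^{⊗n})`: supremum of `D_0(p̃‖q^{⊗n})` over
probability vectors `p̃` within trace distance `ε` of `p^{⊗n}`. -/
noncomputable def DminSmooth {d : ℕ} (ε : ℝ) (n : ℕ) (p q : Fin d → ℝ) : ℝ :=
  sSup {x : ℝ | ∃ pt : (Fin n → Fin d) → ℝ,
    IsProbVec pt ∧ traceDist pt (tensorPow p n) ≤ ε ∧ x = Dmin pt (tensorPow q n)}

lemma aux_sum_cons {d n : ℕ} (F : (Fin (n+1) → Fin d) → ℝ) :
    ∑ f, F f = ∑ a : Fin d, ∑ f : Fin n → Fin d, F (Fin.cons a f) := by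
  rw [← Fintype.sum_prod_type']
  symm
  apply Fintype.sum_equiv (Fin.consEquiv (fun _ : Fin (n+1) => Fin d))
  intro x
  rfl

lemma aux_tp_cons {d n : ℕ} (p : Fin d → ℝ) (a : Fin d) (f : Fin n → Fin d) :
    tensorPow p (n+1) (Fin.cons a f) = p a * tensorPow p n f := by
  simp [tensorPow, Fin.prod_univ_succ]

lemma aux_tp_sum {d : ℕ} (p : Fin d → ℝ) (hp : ∑ i, p i = 1) (n : ℕ) :
    ∑ f, tensorPow p n f = 1 := by
  induction n with
  | zero => simp [tensorPow]
  | succ n ih =>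
    rw [aux_sum_cons]
    simp only [aux_tp_cons, ← Finset.mul_sum, ih, mul_one, hp]

lemma aux_tp_mean {d : ℕ} (p g : Fin d → ℝ) (hp : ∑ i, p i = 1) (hg : ∑ i, p i * g i = 0)
    (n : ℕ) : ∑ f, tensorPow p n f * (∑ k, g (f k)) = 0 := by
  induction n with
  | zero => simp [tensorPow]
  | succ n ih =>
    rw [aux_sum_cons]
    have h : ∀ a, ∑ f : Fin n → Fin d, tensorPow p (n+1) (Fin.cons a f) *
        (∑ k, g ((Fin.cons a f : Fin (n+1) → Fin d) k)) = p a * g a := by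
      intro a
      have : ∀ f : Fin n → Fin d, tensorPow p (n+1) (Fin.cons a f) *
        (∑ k, g ((Fin.cons a f : Fin (n+1) → Fin d) k))
        = (p a * g a) * tensorPow p n f + p a * (tensorPow p n f * ∑ k, g (f k)) := by
        intro f
        rw [aux_tp_cons, Fin.sum_univ_succ]
        simp only [Fin.cons_zero, Fin.cons_succ]
        ring
      simp only [this, Finset.sum_add_distrib, ← Finset.mul_sum, ih, aux_tp_sum p hp]
      ring
    simp only [h, hg]

lemma aux_tp_var {d : ℕ} (p g : Fin d → ℝ) (hp : ∑ i, p i = 1) (hg : ∑ i, p i * g i = 0)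
    (n : ℕ) : ∑ f, tensorPow p n f * (∑ k, g (f k))^2 = n * ∑ i, p i * g i ^ 2 := by
  induction n with
  | zero => simp [tensorPow]
  | succ n ih =>
    rw [aux_sum_cons]
    have h : ∀ a, ∑ f : Fin n → Fin d, tensorPow p (n+1) (Fin.cons a f) *
        (∑ k, g ((Fin.cons a f : Fin (n+1) → Fin d) k))^2
          = p a * g a ^ 2 + p a * (n * ∑ i, p i * g i ^ 2) := by
      intro a
      have : ∀ f : Fin n → Fin d, tensorPow p (n+1) (Fin.cons a f) *
        (∑ k, g ((Fin.cons a f : Fin (n+1) → Fin d) k))^2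
        = (p a * g a ^ 2) * tensorPow p n f
          + (2 * p a * g a) * (tensorPow p n f * ∑ k, g (f k))
          + p a * (tensorPow p n f * (∑ k, g (f k))^2) := by
        intro f
        rw [aux_tp_cons, Fin.sum_univ_succ]
        simp only [Fin.cons_zero, Fin.cons_succ]
        ring
      simp only [this, Finset.sum_add_distrib, ← Finset.mul_sum, ih, aux_tp_sum p hp,
        aux_tp_mean p g hp hg]
      ring
    simp only [h, Finset.sum_add_distrib, ← Finset.sum_mul, hp]
    push_cast
    ring

lemma aux_tp_pos {d : ℕ} (p : Fin d → ℝ) (hp : ∀ i, 0 < p i) (n : ℕ) (f) :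
    0 < tensorPow p n f := Finset.prod_pos fun _ _ => hp _

/-- Chebyshev. -/
lemma aux_cheb {d : ℕ} (p g : Fin d → ℝ) (hp : ∑ i, p i = 1) (hpos : ∀ i, 0 < p i)
    (hg : ∑ i, p i * g i = 0) (δ η : ℝ) (hδ : 0 < δ) (hη : 0 < η) :
    ∀ᶠ n : ℕ in atTop, 
      1 - η ≤ ∑ f ∈ Finset.univ.filter (fun f : Fin n → Fin d => |∑ k, g (f k)| ≤ n * δ),
        tensorPow p n f := by
  set V := ∑ i, p i * g i ^ 2 with hV
  have hV0 : 0 ≤ V := Finset.sum_nonneg fun i _ => mul_nonneg (hpos i).le (sq_nonneg _)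
  obtain ⟨N, hN⟩ := exists_nat_gt (V / (η * δ^2))
  filter_upwards [eventually_ge_atTop N, eventually_gt_atTop 0] with n hn hn0
  have hn0' : (0:ℝ) < n := by exact_mod_cast hn0
  have hnN : V / (η * δ^2) < n := hN.trans_le (by exact_mod_cast hn)
  rw [div_lt_iff₀ (by positivity)] at hnN
  have hsplit := Finset.sum_filter_add_sum_filter_not Finset.univ
    (fun f : Fin n → Fin d => |∑ k, g (f k)| ≤ n * δ) (tensorPow p n)
  rw [aux_tp_sum p hp] at hsplit
  suffices h : ∑ f ∈ Finset.univ.filter (fun f : Fin n → Fin d => ¬ |∑ k, g (f k)| ≤ n * δ),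
        tensorPow p n f ≤ η by linarith
  have h1 : (n * δ)^2 * ∑ f ∈ Finset.univ.filter (fun f : Fin n → Fin d => ¬ |∑ k, g (f k)| ≤ n * δ),
        tensorPow p n f ≤ n * V := by
    rw [← aux_tp_var p g hp hg n, Finset.mul_sum]
    refine le_trans (Finset.sum_le_sum (g := fun f => tensorPow p n f * (∑ k, g (f k))^2) ?_)
      (Finset.sum_le_sum_of_subset_of_nonneg (Finset.filter_subset _ _) ?_)
    · intro f hf
      have hf' := (Finset.mem_filter.1 hf).2
      push Not at hf'
      rw [mul_comm]
      apply mul_le_mul_of_nonneg_left _ (aux_tp_pos p hpos n f).le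
      rw [← sq_abs (∑ k, g (f k))]
      exact pow_le_pow_left₀ (by positivity) hf'.le 2
    · intro f _ _
      exact mul_nonneg (aux_tp_pos p hpos n f).le (sq_nonneg _)
  have h2 : (n * δ)^2 * ∑ f ∈ Finset.univ.filter (fun f : Fin n → Fin d => ¬ |∑ k, g (f k)| ≤ n * δ),
        tensorPow p n f ≤ (n * δ)^2 * η := by
    refine h1.trans ?_
    have := mul_le_mul_of_nonneg_left hnN.le hn0'.le
    nlinarith
  exact le_of_mul_le_mul_left h2 (by positivity)

section gen
variable {ι : Type*} [Fintype ι]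

lemma aux_le_sup (pt Q : ι → ℝ) (hQ : ∀ i, 0 < Q i) (i : ι) :
    pt i ≤ sSup (Set.range fun i => pt i / Q i) * Q i := by
  rw [← div_le_iff₀ (hQ i)]
  exact le_csSup (Set.finite_range _).bddAbove ⟨i, rfl⟩

lemma aux_one_le_sup (pt Q : ι → ℝ) (hpt : IsProbVec pt) (hQ : IsProbVec Q)
    (hQp : ∀ i, 0 < Q i) : 1 ≤ sSup (Set.range fun i => pt i / Q i) := by
  have := Finset.sum_le_sum fun i (_ : i ∈ Finset.univ) => aux_le_sup pt Q hQp i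
  rwa [hpt.2, ← Finset.mul_sum, hQ.2, mul_one] at this

lemma aux_Dmax_nonneg (pt Q : ι → ℝ) (hpt : IsProbVec pt) (hQ : IsProbVec Q)
    (hQp : ∀ i, 0 < Q i) : 0 ≤ Dmax pt Q :=
  Real.log_nonneg (aux_one_le_sup pt Q hpt hQ hQp)

lemma aux_Dmax_le (pt Q : ι → ℝ) (hpt : IsProbVec pt) (hQ : IsProbVec Q)
    (hQp : ∀ i, 0 < Q i) (K : ℝ) (hK0 : 0 ≤ K) (hK : ∀ i, pt i ≤ K * Q i) :
    Dmax pt Q ≤ Real.log K := by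
  apply Real.log_le_log (lt_of_lt_of_le one_pos (aux_one_le_sup pt Q hpt hQ hQp))
  apply Real.sSup_le _ hK0
  rintro _ ⟨i, rfl⟩
  exact (div_le_iff₀ (hQp i)).2 (hK i)

lemma aux_tv (P pt : ι → ℝ) (hP : IsProbVec P) (hpt : IsProbVec pt) (B : ι → Prop)
    [DecidablePred B] :
    ∑ i ∈ Finset.univ.filter B, P i - ∑ i ∈ Finset.univ.filter B, pt i ≤ traceDist pt P := by
  have h1 := Finset.sum_filter_add_sum_filter_not Finset.univ B P
  have h2 := Finset.sum_filter_add_sum_filter_not Finset.univ B pt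
  have h3 := Finset.sum_filter_add_sum_filter_not Finset.univ B (fun i => |pt i - P i|)
  rw [hP.2] at h1
  rw [hpt.2] at h2
  have h4 : ∑ i ∈ Finset.univ.filter B, (P i - pt i) ≤
      ∑ i ∈ Finset.univ.filter B, |pt i - P i| :=
    Finset.sum_le_sum fun i _ => by rw [abs_sub_comm]; exact le_abs_self _
  have h5 : ∑ i ∈ Finset.univ.filter (fun i => ¬ B i), (pt i - P i) ≤
      ∑ i ∈ Finset.univ.filter (fun i => ¬ B i), |pt i - P i| :=
    Finset.sum_le_sum fun i _ => le_abs_self _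
  rw [Finset.sum_sub_distrib] at h4 h5
  unfold traceDist
  linarith

lemma aux_upper (P Q : ι → ℝ) (hP : IsProbVec P) (hQ : IsProbVec Q)
    (A : ι → Prop) [DecidablePred A] (K ε : ℝ) (hK0 : 0 ≤ K)
    (hK : ∀ i, A i → P i ≤ K * Q i) (hA : 1 - ε ≤ ∑ i ∈ Finset.univ.filter A, P i) :
    ∃ pt, IsProbVec pt ∧ traceDist pt P ≤ ε ∧ ∀ i, pt i ≤ (K + 1) * Q i := by
  set m := ∑ i ∈ Finset.univ.filter A, P i with hm
  have h1 := Finset.sum_filter_add_sum_filter_not Finset.univ A P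
  rw [hP.2] at h1
  have hm0 : 0 ≤ m := Finset.sum_nonneg fun i _ => hP.1 i
  have hm1 : m ≤ 1 := by
    have : 0 ≤ ∑ i ∈ Finset.univ.filter (fun i => ¬ A i), P i :=
      Finset.sum_nonneg fun i _ => hP.1 i
    linarith
  refine ⟨fun i => (if A i then P i else 0) + (1 - m) * Q i, ⟨?_, ?_⟩, ?_, ?_⟩
  · intro i
    have := hP.1 i
    have := mul_nonneg (sub_nonneg.2 hm1) (hQ.1 i)
    dsimp only
    split_ifs <;> linarith
  · rw [Finset.sum_add_distrib, ← Finset.sum_filter, ← Finset.mul_sum, hQ.2]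
    linarith
  · have h2 : ∑ i, |(if A i then P i else 0) + (1 - m) * Q i - P i| ≤
        ∑ i, ((1 - m) * Q i + if ¬ A i then P i else 0) := by
      apply Finset.sum_le_sum
      intro i _
      have := hP.1 i
      have := mul_nonneg (sub_nonneg.2 hm1) (hQ.1 i)
      rw [abs_le]
      by_cases h : A i <;> simp only [h, if_true, if_false, not_true, not_false_eq_true] <;>
        constructor <;> linarith
    rw [Finset.sum_add_distrib, ← Finset.sum_filter, ← Finset.mul_sum, hQ.2] at h2
    unfold traceDist
    linarith
  · intro i
    have h3 := hQ.1 i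
    have h4 := mul_nonneg hK0 h3
    have h5 := mul_nonneg hm0 h3
    dsimp only
    split_ifs with h
    · have := hK i h
      linarith
    · linarith

lemma aux_lower (P Q pt : ι → ℝ) (hP : IsProbVec P) (hQ : IsProbVec Q) (hpt : IsProbVec pt)
    (hQp : ∀ i, 0 < Q i)
    (B : ι → Prop) [DecidablePred B] (x ε c : ℝ) (hc : 0 < c)
    (hK : ∀ i, B i → Real.exp x * Q i ≤ P i) (hB : c + ε ≤ ∑ i ∈ Finset.univ.filter B, P i)
    (htd : traceDist pt P ≤ ε) :
    x + Real.log c ≤ Dmax pt Q := by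
  have h1 := aux_tv P pt hP hpt B
  set M := sSup (Set.range fun i => pt i / Q i) with hM
  have hM1 : 1 ≤ M := aux_one_le_sup pt Q hpt hQ hQp
  have h2 : ∑ i ∈ Finset.univ.filter B, pt i ≤ ∑ i ∈ Finset.univ.filter B, M * Q i :=
    Finset.sum_le_sum fun i _ => aux_le_sup pt Q hQp i
  have h3 : ∑ i ∈ Finset.univ.filter B, Real.exp x * Q i ≤ 1 := by
    rw [← hP.2]
    exact (Finset.sum_le_sum fun i hi => hK i (Finset.mem_filter.1 hi).2).trans
      (Finset.sum_le_sum_of_subset_of_nonneg (Finset.filter_subset _ _) fun i _ _ => hP.1 i)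
  rw [← Finset.mul_sum] at h2 h3
  have h4 : c ≤ M * ∑ i ∈ Finset.univ.filter B, Q i := by linarith
  have h5 : Real.exp x * c ≤ M := by
    calc Real.exp x * c ≤ Real.exp x * (M * ∑ i ∈ Finset.univ.filter B, Q i) :=
          mul_le_mul_of_nonneg_left h4 (Real.exp_pos x).le
      _ = M * (Real.exp x * ∑ i ∈ Finset.univ.filter B, Q i) := by ring
      _ ≤ M * 1 := mul_le_mul_of_nonneg_left h3 (by linarith)
      _ = M := mul_one M
  have h6 := Real.log_le_log (by positivity) h5
  rwa [Real.log_mul (Real.exp_pos x).ne' hc.ne', Real.log_exp] at h6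

end gen

lemma aux_tp_prob {d : ℕ} (p : Fin d → ℝ) (hp : IsProbVec p) (hpos : ∀ i, 0 < p i) (n : ℕ) :
    IsProbVec (tensorPow p n) :=
  ⟨fun f => (aux_tp_pos p hpos n f).le, aux_tp_sum p hp.2 n⟩

lemma aux_ratio {d : ℕ} (p q : Fin d → ℝ) (hppos : ∀ i, 0 < p i) (hqpos : ∀ i, 0 < q i)
    (D : ℝ) (n : ℕ) (f : Fin n → Fin d) :
    tensorPow p n f = Real.exp (n * D + ∑ k, (Real.log (p (f k) / q (f k)) - D))
      * tensorPow q n f := by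
  have : n * D + ∑ k, (Real.log (p (f k) / q (f k)) - D)
      = ∑ k, Real.log (p (f k) / q (f k)) := by
    simp [Finset.sum_sub_distrib]
  rw [this, Real.exp_sum, tensorPow, tensorPow, ← Finset.prod_mul_distrib]
  apply Finset.prod_congr rfl
  intro k _
  rw [Real.exp_log (div_pos (hppos _) (hqpos _)), div_mul_cancel₀ _ (hqpos _).ne']

lemma aux_gibbs {d : ℕ} (p q : Fin d → ℝ)
    (hp : IsProbVec p) (hq : IsProbVec q)
    (hppos : ∀ i, 0 < p i) (hqpos : ∀ i, 0 < q i) :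
    0 ≤ ∑ i, p i * Real.log (p i / q i) := by
  have h : ∑ i, (p i - q i) ≤ ∑ i, p i * Real.log (p i / q i) := by
    apply Finset.sum_le_sum
    intro i _
    have h1 := Real.log_le_sub_one_of_pos (div_pos (hqpos i) (hppos i))
    have h2 : Real.log (p i / q i) = - Real.log (q i / p i) := by
      rw [← Real.log_inv, inv_div]
    have h3 := mul_le_mul_of_nonneg_left h1 (hppos i).le
    have h4 : p i * (q i / p i - 1) = q i - p i := by
      have := (hppos i).ne'
      field_simp
    rw [h2]
    linarith
  rw [Finset.sum_sub_distrib, hp.2, hq.2] at h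
  linarith

lemma aux_main {d : ℕ} (p q : Fin d → ℝ)
    (hp : IsProbVec p) (hq : IsProbVec q)
    (hppos : ∀ i, 0 < p i) (hqpos : ∀ i, 0 < q i) (ε : ℝ) (hε : 0 < ε) (hε1 : ε < 1) :
    Tendsto (fun n : ℕ => DmaxSmooth ε n p q / (n : ℝ)) atTop
      (𝓝 (∑ i, p i * Real.log (p i / q i))) := by
  set D := ∑ i, p i * Real.log (p i / q i) with hD
  have hD0 : 0 ≤ D := aux_gibbs p q hp hq hppos hqpos
  have hg : ∑ i, p i * (Real.log (p i / q i) - D) = 0 := by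
    simp only [mul_sub, Finset.sum_sub_distrib, ← Finset.sum_mul, hp.2]
    linarith
  rw [Metric.tendsto_nhds]
  intro r hr
  set c := (1 - ε) / 2 with hc
  have hc0 : 0 < c := by linarith
  have hη : 0 < min c ε := lt_min hc0 hε
  obtain ⟨N, hN⟩ := exists_nat_gt ((|Real.log c| + Real.log 2) / (r/3))
  filter_upwards [aux_cheb p (fun i => Real.log (p i / q i) - D) hp.2 hppos hg (r/3) (min c ε)
    (by positivity) hη, eventually_ge_atTop N, eventually_gt_atTop 0] with n hn hnN hn0
  have hn0' : (0:ℝ) < n := by exact_mod_cast hn0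
  have hnN' : (|Real.log c| + Real.log 2) / (r/3) < n := hN.trans_le (by exact_mod_cast hnN)
  rw [div_lt_iff₀ (by positivity)] at hnN'
  have hlog2 : 0 ≤ Real.log 2 := Real.log_nonneg (by norm_num)
  have hP := aux_tp_prob p hp hppos n
  have hQ := aux_tp_prob q hq hqpos n
  have hQp := aux_tp_pos q hqpos n
  -- upper
  obtain ⟨pt, hpt, htd, hle⟩ := aux_upper (tensorPow p n) (tensorPow q n) hP hQ
    (fun f : Fin n → Fin d => |∑ k, (Real.log (p (f k) / q (f k)) - D)| ≤ n * (r/3))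
    (Real.exp (n * D + n * (r/3))) ε (Real.exp_pos _).le (by
      intro f hf
      rw [aux_ratio p q hppos hqpos D n f]
      apply mul_le_mul_of_nonneg_right _ (hQp f).le
      apply Real.exp_le_exp.2
      have := (abs_le.1 hf).2
      linarith) (by have := min_le_right c ε; linarith)
  have hup := aux_Dmax_le pt _ hpt hQ hQp _ (by positivity) hle
  have hexp : 1 ≤ Real.exp (n * D + n * (r/3)) := Real.one_le_exp (by positivity)
  have hup2 : Real.log (Real.exp (n * D + n * (r/3)) + 1) ≤ n * D + n * (r/3) + Real.log 2 := by
    have h := Real.log_le_log (by positivity)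
      (show Real.exp (n * D + n * (r/3)) + 1 ≤ Real.exp (n * D + n * (r/3)) * 2 by linarith)
    rwa [Real.log_mul (Real.exp_pos _).ne' (by norm_num), Real.log_exp] at h
  have hU : DmaxSmooth ε n p q ≤ n * D + n * (r/3) + Real.log 2 := by
    refine le_trans (b := Dmax pt (tensorPow q n))
      (csInf_le ⟨0, ?_⟩ ⟨pt, hpt, htd, rfl⟩) (hup.trans hup2)
    rintro _ ⟨pt, hpt, -, rfl⟩
    exact aux_Dmax_nonneg pt _ hpt hQ hQp
  have hL : n * D - n * (r/3) + Real.log c ≤ DmaxSmooth ε n p q := by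
    refine le_csInf ⟨_, pt, hpt, htd, rfl⟩ ?_
    rintro _ ⟨pt, hpt, htd, rfl⟩
    apply aux_lower (tensorPow p n) (tensorPow q n) pt hP hQ hpt hQp
      (fun f : Fin n → Fin d => |∑ k, (Real.log (p (f k) / q (f k)) - D)| ≤ n * (r/3))
      _ ε c hc0 _ _ htd
    · intro f hf
      rw [aux_ratio p q hppos hqpos D n f]
      apply mul_le_mul_of_nonneg_right _ (hQp f).le
      apply Real.exp_le_exp.2
      have := (abs_le.1 hf).1
      linarith
    · have := min_le_left c ε
      linarith
  have hlc := neg_abs_le (Real.log c)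
  have hlc' := abs_nonneg (Real.log c)
  have hnr : 0 < n * r := by positivity
  rw [Real.dist_eq, abs_lt]
  constructor
  · rw [lt_sub_iff_add_lt, lt_div_iff₀ hn0']
    nlinarith
  · rw [sub_lt_iff_lt_add, div_lt_iff₀ hn0']
    nlinarith

lemma aux_big {d : ℕ} (p q : Fin d → ℝ)
    (hp : IsProbVec p) (hq : IsProbVec q)
    (hppos : ∀ i, 0 < p i) (hqpos : ∀ i, 0 < q i) (ε : ℝ) (hε1 : 1 ≤ ε) (n : ℕ) :
    DmaxSmooth ε n p q = 0 := by
  have hP := aux_tp_prob p hp hppos n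
  have hQ := aux_tp_prob q hq hqpos n
  have hQp := aux_tp_pos q hqpos n
  have htd : traceDist (tensorPow q n) (tensorPow p n) ≤ ε := by
    have : ∑ f, |tensorPow q n f - tensorPow p n f| ≤ ∑ f, (tensorPow q n f + tensorPow p n f) := by
      apply Finset.sum_le_sum
      intro f _
      have := hP.1 f
      have := hQ.1 f
      rw [abs_le]
      constructor <;> linarith
    rw [Finset.sum_add_distrib, hP.2, hQ.2] at this
    unfold traceDist
    linarith
  have h0 : Dmax (tensorPow q n) (tensorPow q n) ≤ 0 := by
    have := aux_Dmax_le _ _ hQ hQ hQp 1 zero_le_one (fun i => by simp)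
    simpa using this
  apply le_antisymm
  · refine le_trans (b := Dmax (tensorPow q n) (tensorPow q n))
      (csInf_le ⟨0, ?_⟩ ⟨_, hQ, htd, rfl⟩) h0
    rintro _ ⟨pt, hpt, -, rfl⟩
    exact aux_Dmax_nonneg pt _ hpt hQ hQp
  · apply Real.sInf_nonneg
    rintro _ ⟨pt, hpt, -, rfl⟩
    exact aux_Dmax_nonneg pt _ hpt hQ hQp

/-- **Asymptotic equipartition for the smoothed max-divergence (Eq. (30), `α = ∞`).**
`lim_{ε→0⁺} lim_{n→∞} (1/n) D_∞^ε(p^{⊗n}‖q^{⊗n}) = D_1(p‖q)`. -/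
theorem smoothed_Dmax_iid_limit {d : ℕ} (p q : Fin d → ℝ)
    (hp : IsProbVec p) (hq : IsProbVec q)
    (hppos : ∀ i, 0 < p i) (hqpos : ∀ i, 0 < q i) :
    ∃ L : ℝ → ℝ,
      (∀ ε : ℝ, 0 < ε →
        Filter.Tendsto (fun n : ℕ => DmaxSmooth ε n p q / (n : ℝ))
          Filter.atTop (𝓝 (L ε))) ∧
      Filter.Tendsto L (𝓝[>] (0 : ℝ)) (𝓝 (∑ i, p i * Real.log (p i / q i))) := by
  refine ⟨fun ε => if ε < 1 then ∑ i, p i * Real.log (p i / q i) else 0, ?_, ?_⟩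
  · intro ε hε
    by_cases h : ε < 1
    · simp only [h, if_true]
      exact aux_main p q hp hq hppos hqpos ε hε h
    · simp only [h, if_false, aux_big p q hp hq hppos hqpos ε (not_lt.1 h), zero_div]
      exact tendsto_const_nhds
  · apply tendsto_const_nhds.congr'
    have : ∀ᶠ ε : ℝ in 𝓝[>] (0:ℝ), ε < 1 :=
      nhdsWithin_le_nhds (Iio_mem_nhds one_pos)
    filter_upwards [this] with ε h
    rw [if_pos h]
end
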